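/- arXiv:2508.17308 — 2 statements merged into one kernel-verified Lean document; each statement's English description precedes it below -/
import Mathlib

section
/- The basin of every attracting or parabolic cycle of g : U' → U contains a critical point of g. -/
open Set Function Metric Topology Filter

noncomputable section

/-- A topological disk: a (nonempty, connected) simply connected planar domain. -/
def IsTopDisk (V : Set ℂ) : Prop :=
  IsOpen V ∧ IsConnected V ∧ SimplyConnectedSpace V

/-- Critical points of `g` lying in `U'`. -/
def critPts (g : ℂ → ℂ) (U' : Set ℂ) : Set ℂ := {z | z ∈ U' ∧ deriv g z = 0}

/-- The postcritical set of `g : U' → U`. -/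
def postCrit (g : ℂ → ℂ) (U' : Set ℂ) : Set ℂ :=
  closure (⋃ n : ℕ, g^[n] '' critPts g U')

/-- `g : U' → U` is a proper map: preimages of compact subsets of `U` are compact. -/
def ProperOn (g : ℂ → ℂ) (U' U : Set ℂ) : Prop :=
  ∀ K : Set ℂ, K ⊆ U → IsCompact K → IsCompact (U' ∩ g ⁻¹' K)

/-- `g : U' → U` has degree `d`: every point of `U` has a preimage, and every point of `U`
which is not a critical value has exactly `d` preimages in `U'`. -/
def HasDeg (g : ℂ → ℂ) (U' U : Set ℂ) (d : ℕ) : Prop :=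
  (∀ w ∈ U, (U' ∩ g ⁻¹' {w}).Nonempty) ∧
  ∀ w ∈ U, w ∉ g '' critPts g U' → (U' ∩ g ⁻¹' {w}).ncard = d

/-- Standing assumptions: `U' ⊆ U` are simply connected domains in `ℂ` with `U' ≠ U`,
`g : U' → U` is a proper holomorphic map of degree `d ≥ 2`, all forward iterates of the
critical points are defined, the postcritical set is a compact subset of `U'`, and if the
postcritical set is a singleton `{c}` then `g⁻¹(c) ≠ {c}`. -/
structure PLSetting (g : ℂ → ℂ) (U' U : Set ℂ) (d : ℕ) : Prop where
  disk' : IsTopDisk U'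
  disk : IsTopDisk U
  subset : U' ⊆ U
  ne : U' ≠ U
  two_le_d : 2 ≤ d
  holo : DifferentiableOn ℂ g U'
  mapsTo : MapsTo g U' U
  proper : ProperOn g U' U
  deg : HasDeg g U' U d
  crit_orbit : ∀ c ∈ critPts g U', ∀ n : ℕ, g^[n] c ∈ U'
  postCrit_compact : IsCompact (postCrit g U')
  postCrit_subset : postCrit g U' ⊆ U'
  postCrit_singleton : ∀ c : ℂ, postCrit g U' = {c} → U' ∩ g ⁻¹' {c} ≠ {c}

/-- The cycle (forward orbit) of a periodic point `a`. -/
def cycleSet (g : ℂ → ℂ) (a : ℂ) : Set ℂ := Set.range fun n : ℕ => g^[n] a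

/-- `z` lies in the basin of the cycle of `a`: its forward orbit is well-defined and
converges to the cycle. -/
def attractedTo (g : ℂ → ℂ) (U' : Set ℂ) (a z : ℂ) : Prop :=
  (∀ n : ℕ, g^[n] z ∈ U') ∧
    Tendsto (fun n : ℕ => Metric.infDist (g^[n] z) (cycleSet g a)) atTop (𝓝 0)

/-- A continuous lift of a holomorphic map through a locally invertible holomorphic map is
holomorphic. -/
lemma differentiableAt_of_lift {g ψ φ : ℂ → ℂ} {w : ℂ} (hg : AnalyticAt ℂ g (ψ w))
    (hg' : deriv g (ψ w) ≠ 0) (hψ : ContinuousAt ψ w) (hφ : DifferentiableAt ℂ φ w)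
    (heq : ∀ᶠ v in 𝓝 w, g (ψ v) = φ v) : DifferentiableAt ℂ ψ w := by
  have hs : HasStrictDerivAt g (deriv g (ψ w)) (ψ w) := hg.hasStrictDerivAt
  have h1 := hψ.eventually (hs.eventually_left_inverse hg')
  have h2 := (hs.to_localInverse hg').hasDerivAt.differentiableAt
  rw [heq.self_of_nhds] at h2
  refine (h2.comp w hφ).congr_of_eventuallyEq ?_
  filter_upwards [h1, heq] with v hv1 hv2
  simp only [comp_apply]
  rw [← hv2, hv1]

lemma PLSetting.analyticAt {g : ℂ → ℂ} {U' U : Set ℂ} {d : ℕ} (H : PLSetting g U' U d)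
    {z : ℂ} (hz : z ∈ U') : AnalyticAt ℂ g z :=
  H.holo.analyticAt (H.disk'.1.mem_nhds hz)

lemma PLSetting.isCoveringMapOn {g : ℂ → ℂ} {U' U : Set ℂ} {d : ℕ} (H : PLSetting g U' U d) :
    IsCoveringMapOn (H.mapsTo.restrict g U' U) {x | (x : ℂ) ∉ g '' critPts g U'} := by
  have hcont : Continuous (H.mapsTo.restrict g U' U) :=
    H.holo.continuousOn.mapsToRestrict H.mapsTo
  have : LocallyCompactSpace U := H.disk.1.locallyCompactSpace
  have hproper : IsProperMap (H.mapsTo.restrict g U' U) := by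
    rw [isProperMap_iff_isCompact_preimage]
    refine ⟨hcont, fun K hK => ?_⟩
    have h1 := H.proper (Subtype.val '' K) (by rintro _ ⟨x, -, rfl⟩; exact x.2)
      (hK.image continuous_subtype_val)
    rw [Subtype.isCompact_iff]
    convert h1 using 1
    ext z
    constructor
    · rintro ⟨y, hy, rfl⟩
      exact ⟨y.2, ⟨_, hy, rfl⟩⟩
    · rintro ⟨hz, ⟨y, hy, hyz⟩⟩
      refine ⟨⟨z, hz⟩, ?_, rfl⟩
      have : H.mapsTo.restrict g U' U ⟨z, hz⟩ = y := Subtype.ext hyz.symm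
      simpa [this] using hy
  refine hproper.isClosedMap.isCoveringMapOn_of_isLocalHomeomorphOn ?_ ?_
  · intro x hx
    have h1 := H.deg.2 x x.2 hx
    have h2 : (U' ∩ g ⁻¹' {(x : ℂ)}).Finite := by
      apply Set.finite_of_ncard_ne_zero
      have := H.two_le_d
      omega
    refine Set.Finite.of_finite_image (f := Subtype.val) (h2.subset ?_) Subtype.val_injective.injOn
    rintro _ ⟨y, hy, rfl⟩
    refine ⟨y.2, ?_⟩
    have : H.mapsTo.restrict g U' U y = x := hy
    simp [← this]
  · have hval : IsLocalHomeomorph (Subtype.val : U → ℂ) :=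
      H.disk.1.isOpenEmbedding_subtypeVal.isLocalHomeomorph
    have hval' : IsLocalHomeomorph (Subtype.val : U' → ℂ) :=
      H.disk'.1.isOpenEmbedding_subtypeVal.isLocalHomeomorph
    refine IsLocalHomeomorphOn.of_comp_left (g := (Subtype.val : U → ℂ)) ?_
      (hval.isLocalHomeomorphOn.mono (subset_univ _)) (fun x _ => hcont.continuousAt)
    have hcomp : (Subtype.val : U → ℂ) ∘ (H.mapsTo.restrict g U' U) = g ∘ (Subtype.val : U' → ℂ) := by
      ext; rfl
    rw [hcomp]
    refine IsLocalHomeomorphOn.comp (t := U' \ critPts g U') ?_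
      (hval'.isLocalHomeomorphOn.mono (subset_univ _)) ?_
    · refine IsLocalHomeomorphOn.mk _ _ fun z hz => ?_
      have hs : HasStrictDerivAt g (deriv g z) z := (H.analyticAt hz.1).hasStrictDerivAt
      have hne : deriv g z ≠ 0 := fun h => hz.2 ⟨hz.1, h⟩
      have hs' := hs.hasStrictFDerivAt_equiv hne
      exact ⟨hs'.toOpenPartialHomeomorph g, hs'.mem_toOpenPartialHomeomorph_source,
        fun _ _ => rfl⟩
    · intro y hy
      refine ⟨y.2, fun hc => hy ⟨y, hc, rfl⟩⟩

lemma PLSetting.lift_step {g : ℂ → ℂ} {U' U : Set ℂ} {d : ℕ} (H : PLSetting g U' U d)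
    {x : ℂ} {r : ℝ} (hr : 0 < r) {φ : ℂ → ℂ} (hφ : DifferentiableOn ℂ φ (ball x r))
    (hmaps : MapsTo φ (ball x r) U) (hcv : ∀ w ∈ ball x r, φ w ∉ g '' critPts g U')
    {y : ℂ} (hy : y ∈ U') (hyx : g y = φ x) :
    ∃ ψ : ℂ → ℂ, DifferentiableOn ℂ ψ (ball x r) ∧ MapsTo ψ (ball x r) U' ∧
      (∀ w ∈ ball x r, g (ψ w) = φ w) ∧ ψ x = y := by
  classical
  have hxb : x ∈ ball x r := mem_ball_self hr
  have : ContractibleSpace (ball x r) := (convex_ball x r).contractibleSpace ⟨x, hxb⟩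
  have : LocallyPathConnectedSpace (ball x r) := isOpen_ball.locallyPathConnectedSpace
  let f : C(ball x r, U) := ⟨hmaps.restrict φ _ _, hφ.continuousOn.mapsToRestrict hmaps⟩
  obtain ⟨F, ⟨hF0, hF⟩, -⟩ := H.isCoveringMapOn.existsUnique_continuousMap_lifts f
    (a₀ := ⟨x, hxb⟩) (e₀ := ⟨y, hy⟩) (Subtype.ext hyx) (fun w => hcv w w.2)
  obtain ⟨ψ, hψ⟩ : ∃ ψ : ℂ → ℂ, ∀ z : ball x r, ψ z = F z :=
    ⟨fun z ↦ if hz : z ∈ ball x r then F ⟨z, hz⟩ else 0, fun z => by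
      have := z.2
      simp only [this, dite_true, Subtype.coe_eta]⟩
  have hψc : ContinuousOn ψ (ball x r) := by
    rw [continuousOn_iff_continuous_domRestrict]
    have : (ball x r).domRestrict ψ = fun z => (F z : ℂ) := by
      ext z
      exact hψ z
    rw [this]
    fun_prop
  have hmap : MapsTo ψ (ball x r) U' := fun w hw => by
    have := hψ ⟨w, hw⟩
    simp only at this
    rw [this]
    exact (F _).2
  have heq : ∀ w ∈ ball x r, g (ψ w) = φ w := fun w hw => by
    have h1 := hψ ⟨w, hw⟩
    simp only at h1
    rw [h1]
    exact congrArg Subtype.val (congrFun hF ⟨w, hw⟩)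
  refine ⟨ψ, ?_, hmap, heq, ?_⟩
  · intro w hw
    have hwn : ball x r ∈ 𝓝 w := isOpen_ball.mem_nhds hw
    refine (differentiableAt_of_lift (H.analyticAt (hmap hw)) ?_ (hψc.continuousAt hwn)
      (hφ.differentiableAt hwn) ?_).differentiableWithinAt
    · intro h0
      exact hcv w hw ⟨ψ w, ⟨hmap hw, h0⟩, heq w hw⟩
    · filter_upwards [hwn] with v hv using heq v hv
  · have := hψ ⟨x, hxb⟩
    simp only at this
    rw [this, hF0]

/-- Iterated inverse branches. -/
lemma PLSetting.lift_iter {g : ℂ → ℂ} {U' U : Set ℂ} {d : ℕ} (H : PLSetting g U' U d)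
    {A : ℂ → Prop} (hAU : ∀ z, A z → z ∈ U') (hA : ∀ z ∈ U', A (g z) → A z)
    (hAc : ∀ c ∈ critPts g U', ¬ A c)
    {x : ℂ} {r : ℝ} (hr : 0 < r) (hball : ∀ z ∈ ball x r, A z) (N : ℕ) :
    ∀ y : ℂ, (∀ i < N, g^[i] y ∈ U') → g^[N] y = x →
    ∃ h : ℂ → ℂ, DifferentiableOn ℂ h (ball x r) ∧ (∀ w ∈ ball x r, A (h w)) ∧
      (∀ w ∈ ball x r, g^[N] (h w) = w) ∧ h x = y := by
  induction N with
  | zero =>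
    intro y _ hy
    exact ⟨id, differentiableOn_id, hball, fun w _ => rfl, hy.symm⟩
  | succ N ih =>
    intro y hy hyx
    obtain ⟨h, hd, hhA, hinv, hx⟩ := ih (g y) (fun i hi => by
      simpa using hy (i + 1) (by omega)) (by simpa using hyx)
    obtain ⟨ψ, hψd, hψm, hψ, hψx⟩ := H.lift_step hr hd
      (fun w hw => H.subset (hAU _ (hhA w hw))) (by
        rintro w hw ⟨c, hc, hcw⟩
        exact hAc c hc (hA c hc.1 (by rw [hcw]; exact hhA w hw)))
      (hy 0 (by omega)) (by simpa using hx.symm)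
    refine ⟨ψ, hψd, fun w hw => hA _ (hψm hw) (by rw [hψ w hw]; exact hhA w hw), fun w hw => ?_,
      hψx⟩
    rw [iterate_succ_apply, hψ w hw, hinv w hw]

/-- A Koebe/Schwarz-type bound for maps into a simply connected proper subdomain of `ℂ`. -/
lemma deriv_bound {V : Set ℂ} (hV : IsTopDisk V) (hne : V ≠ univ) {z₀ : ℂ} (hz₀ : z₀ ∈ V) :
    ∃ C : ℝ, 0 < C ∧ ∀ (x : ℂ) (r : ℝ) (h : ℂ → ℂ), 0 < r → DifferentiableOn ℂ h (ball x r) →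
      MapsTo h (ball x r) V → h x = z₀ → ‖deriv h x‖ * r ≤ C := by
  obtain ⟨u, hu⟩ := (ne_univ_iff_exists_notMem V).1 hne
  obtain ⟨s, hsc, hs⟩ := Complex.exists_continuousOn_pow_eq (U := V) hV.2.2 hV.1
    (g := fun z => z - u) (by fun_prop) (by
      rintro ⟨z, hz, hzu⟩
      exact hu (by rw [← sub_eq_zero.1 hzu]; exact hz)) (n := 2) two_ne_zero
  have hs0 : ∀ z ∈ V, s z ≠ 0 := fun z hz h0 => by
    have := hs z
    rw [h0] at this
    have h1 : z = u := by
      have : z - u = 0 := by simpa using this.symm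
      exact sub_eq_zero.1 this
    exact hu (h1 ▸ hz)
  have hsd : DifferentiableOn ℂ s V := fun z hz => by
    have hVn := hV.1.mem_nhds hz
    refine (differentiableAt_of_lift (g := fun w => w ^ 2) (φ := fun z => z - u) (by fun_prop) ?_
      (hsc.continuousAt hVn) (by fun_prop) (Eventually.of_forall hs)).differentiableWithinAt
    simpa using hs0 z hz
  have hV0 := hV.1.mem_nhds hz₀
  have hs' : deriv s z₀ ≠ 0 := by
    intro h0
    have h1 : HasDerivAt s 0 z₀ := h0 ▸ (hsd.differentiableAt hV0).hasDerivAt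
    have h2 := h1.pow 2
    have h3 : HasDerivAt (s ^ 2) 1 z₀ := by
      have : s ^ 2 = fun z => z - u := funext hs
      rw [this]
      exact (hasDerivAt_id z₀).sub_const u
    have := h2.unique h3
    simp at this
  have hmap := ((hsd.analyticAt hV0).hasStrictDerivAt).map_nhds_eq hs'
  have himg : s '' V ∈ 𝓝 (s z₀) := by
    rw [← hmap]
    exact image_mem_map hV0
  obtain ⟨ε, hε, hball⟩ := Metric.mem_nhds_iff.1 himg
  have hfar : ∀ z ∈ V, ε ≤ ‖s z + s z₀‖ := by
    intro z hz
    by_contra hlt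
    push Not at hlt
    have : - s z ∈ ball (s z₀) ε := by
      have h1 : - s z - s z₀ = -(s z + s z₀) := by ring
      rw [mem_ball, dist_eq_norm, h1, norm_neg]
      exact hlt
    obtain ⟨z', hz', he⟩ := hball this
    have h1 := hs z'
    rw [he] at h1
    have h2 := hs z
    have h3 : z' = z := by
      have : z' - u = z - u := by rw [← h1, ← h2]; ring
      simpa using this
    rw [h3] at he
    have : s z = 0 := by
      have : 2 * s z = 0 := by linear_combination he
      simpa using this
    exact hs0 z hz this
  let φ : ℂ → ℂ := fun z => (s z + s z₀)⁻¹
  have hne0 : ∀ z ∈ V, s z + s z₀ ≠ 0 := fun z hz h0 => by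
    have := hfar z hz
    rw [h0, norm_zero] at this
    linarith
  have hφd : DifferentiableOn ℂ φ V := (hsd.add_const _).inv hne0
  have hφb : ∀ z ∈ V, ‖φ z‖ ≤ ε⁻¹ := fun z hz => by
    simp only [φ, norm_inv]
    exact inv_anti₀ hε (hfar z hz)
  have hφ' : deriv φ z₀ ≠ 0 := by
    have h1 := (((hsd.differentiableAt hV0).hasDerivAt).add_const (s z₀)).fun_inv (hne0 z₀ hz₀)
    have h2 : deriv φ z₀ = _ := h1.deriv
    rw [h2]
    exact div_ne_zero (neg_ne_zero.2 hs') (pow_ne_zero _ (hne0 z₀ hz₀))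
  have hpos : 0 < ‖deriv φ z₀‖ := norm_pos_iff.2 hφ'
  refine ⟨2 * ε⁻¹ / ‖deriv φ z₀‖, by positivity, ?_⟩
  intro x r h hr hd hm hx
  have hxb : ball x r ∈ 𝓝 x := ball_mem_nhds x hr
  have h1 := Complex.norm_deriv_le_div_of_mapsTo_ball (f := φ ∘ h) (c := x) (R₁ := r)
    (R₂ := 2 * ε⁻¹) (hφd.comp hd hm) (by
      intro w hw
      rw [mem_closedBall, dist_eq_norm]
      have h2 := hφb _ (hm hw)
      have h3 := hφb _ (hm (mem_ball_self hr))
      calc _ ≤ ‖φ (h w)‖ + ‖φ (h x)‖ := norm_sub_le _ _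
        _ ≤ _ := by linarith) hr
  rw [deriv_comp x (by rw [hx]; exact hφd.differentiableAt hV0) (hd.differentiableAt hxb), hx,
    norm_mul, le_div_iff₀ hr] at h1
  rw [le_div_iff₀ hpos]
  linarith

/-- The elementary inequality behind the contraction estimate in an attracting petal. -/
lemma petal_ineq {D Y u : ℂ} {m : ℝ} (hm : 1 ≤ m) (hD : ‖D - 1 - (m + 1) * u‖ ≤ ‖u‖ / 20)
    (hY : ‖Y - 1 - u‖ ≤ ‖u‖ / 20) (hu : u.re ≤ -(‖u‖ / 2))
    (hu' : ‖u‖ ≤ 1 / (4 * (m + 2) ^ 2)) : ‖D‖ ^ 2 ≤ ‖Y‖ ^ 3 := by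
  have hn := norm_nonneg u
  have hu1 : (m + 2) ^ 2 * ‖u‖ ≤ 1 / 4 := by
    rw [le_div_iff₀ (by positivity)] at hu'
    linarith
  have hu2 : ‖u‖ ≤ 1 / 4 := by nlinarith
  set X := D - 1 with hX
  have hDX : D = 1 + X := by rw [hX]; ring
  have h1 : ‖D‖ ^ 2 = 1 + 2 * X.re + ‖X‖ ^ 2 := by
    rw [hDX, Complex.sq_norm, Complex.sq_norm, Complex.normSq_apply, Complex.normSq_apply]
    simp
    ring
  have h2 : X.re ≤ (m + 1) * u.re + ‖u‖ / 20 := by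
    have := (Complex.re_le_norm (X - (m + 1) * u)).trans hD
    simp at this
    linarith
  have h3 : ‖X‖ ≤ (m + 2) * ‖u‖ := by
    have h4 : X = (X - (m + 1) * u) + ((m + 1 : ℝ) : ℂ) * u := by push_cast; ring
    have h5 : ‖((m + 1 : ℝ) : ℂ) * u‖ = (m + 1) * ‖u‖ := by
      rw [norm_mul, Complex.norm_real, Real.norm_of_nonneg (by linarith)]
    calc ‖X‖ = ‖(X - (m + 1) * u) + ((m + 1 : ℝ) : ℂ) * u‖ := by rw [← h4]
      _ ≤ ‖X - (m + 1) * u‖ + ‖((m + 1 : ℝ) : ℂ) * u‖ := norm_add_le _ _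
      _ ≤ _ := by rw [h5]; linarith
  have h6 : ‖X‖ ^ 2 ≤ ‖u‖ / 4 := by
    calc ‖X‖ ^ 2 ≤ ((m + 2) * ‖u‖) ^ 2 := by gcongr
      _ = ((m + 2) ^ 2 * ‖u‖) * ‖u‖ := by ring
      _ ≤ 1 / 4 * ‖u‖ := by gcongr
      _ = _ := by ring
  have h7 : 1 + u.re - ‖u‖ / 20 ≤ Y.re := by
    have := (abs_le.1 (Complex.abs_re_le_norm (Y - 1 - u))).1
    simp at this
    linarith
  have h8 : Y.re ≤ ‖Y‖ := Complex.re_le_norm Y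
  have h9 : -‖u‖ ≤ u.re := (abs_le.1 (Complex.abs_re_le_norm u)).1
  set q := u.re - ‖u‖ / 20 with hq
  have hq1 : -1 / 2 ≤ q := by linarith
  have h10 : 1 + 3 * q ≤ ‖Y‖ ^ 3 := by
    calc 1 + 3 * q ≤ (1 + q) ^ 3 := by nlinarith [sq_nonneg q]
      _ ≤ ‖Y‖ ^ 3 := by gcongr <;> linarith
  have h11 : (2 * m - 1) * u.re ≤ 1 * u.re := by
    have : u.re ≤ 0 := by linarith
    nlinarith
  nlinarith

/-- Structure of an attracting petal at a fixed point of multiplier one. -/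
lemma exists_petal {f : ℂ → ℂ} {a : ℂ} (hf : AnalyticAt ℂ f a) (hfa : f a = a)
    (hf' : deriv f a = 1) (hid : ¬ ∀ᶠ z in 𝓝 a, f z = z) {δ : ℝ} (hδ : 0 < δ) :
    ∃ (S : Set ℂ) (z₀ : ℂ) (κ : ℝ), 0 < κ ∧ S ⊆ ball a δ ∧ a ∉ S ∧ MapsTo f S S ∧
      (∀ z ∈ S, Tendsto (fun n => f^[n] z) atTop (𝓝 a)) ∧ z₀ ∈ S ∧
      (∀ n, ball (f^[n] z₀) (κ * ‖f^[n] z₀ - a‖) ⊆ S) ∧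
      (∀ n, ‖deriv f (f^[n] z₀)‖ ^ 2 * ‖f^[n] z₀ - a‖ ^ 3 ≤ ‖f^[n + 1] z₀ - a‖ ^ 3) := by
  have hF : AnalyticAt ℂ (fun z => f z - z) a := hf.sub analyticAt_id
  obtain ⟨n, k, hk, hk0, hFk⟩ := hF.exists_eventuallyEq_pow_smul_nonzero_iff.2 (by
    intro h
    exact hid (h.mono fun z hz => sub_eq_zero.1 hz))
  have hkd : HasDerivAt k (deriv k a) a := hk.differentiableAt.hasDerivAt
  obtain ⟨m, hm, rfl⟩ : ∃ m, 1 ≤ m ∧ n = m + 1 := by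
    rcases n with _ | _ | m
    · have := hFk.self_of_nhds
      simp [hfa] at this
      exact absurd this.symm hk0
    · exfalso
      have h1 : HasDerivAt (fun z => f z - z) (1 - 1) a := by
        have := hf.differentiableAt.hasDerivAt
        rw [hf'] at this
        exact this.sub (hasDerivAt_id a)
      have h2 : HasDerivAt (fun z => (z - a) * k z) (1 * k a + (a - a) * deriv k a) a :=
        ((hasDerivAt_id a).sub_const a).mul hkd
      have h3 := (h2.congr_of_eventuallyEq (hFk.mono fun z hz => by simpa using hz)).unique h1
      simp at h3
      exact hk0 h3
    · exact ⟨m + 1, by omega, rfl⟩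
  set b := k a with hb
  have hbn : 0 < ‖b‖ := norm_pos_iff.2 hk0
  have hm0 : m ≠ 0 := by omega
  have hmR : (1 : ℝ) ≤ m := by exact_mod_cast hm
  let u : ℂ → ℂ := fun z => b * (z - a) ^ m
  let v : ℂ → ℂ := fun z => -(u z)⁻¹
  -- near facts
  have E1 : ∀ᶠ z in 𝓝 a, f z - a = (z - a) * (1 + (z - a) ^ m * k z) := by
    filter_upwards [hFk] with z hz
    have : f z = z + (z - a) ^ (m + 1) * k z := by
      rw [← smul_eq_mul, ← hz]; ring
    rw [this]; ring
  have E2 : ∀ᶠ z in 𝓝 a, ‖(1 + (z - a) ^ m * k z) - 1 - u z‖ ≤ ‖u z‖ / 20 := by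
    have h1 : Tendsto (fun z => ‖k z - b‖) (𝓝 a) (𝓝 0) := by
      have := (hk.continuousAt.sub (continuousAt_const (y := b))).norm
      simpa [ContinuousAt, ← hb] using this
    filter_upwards [h1.eventually (gt_mem_nhds (show (0:ℝ) < ‖b‖ / 20 by positivity))] with z hz
    have : (1 + (z - a) ^ m * k z) - 1 - u z = (z - a) ^ m * (k z - b) := by
      simp only [u]; ring
    rw [this]
    simp only [u, norm_mul]
    nlinarith [norm_nonneg ((z - a) ^ m)]
  have E3 : ∀ᶠ z in 𝓝 a, ‖deriv f z - 1 - ((m : ℝ) + 1) * u z‖ ≤ ‖u z‖ / 20 := by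
    have hk' : ContinuousAt (deriv k) a := hk.deriv.continuousAt
    have h1 : Tendsto (fun z => ‖((m : ℂ) + 1) * (k z - b) + (z - a) * deriv k z‖) (𝓝 a) (𝓝 0) := by
      have hkc := hk.continuousAt
      have : ContinuousAt (fun z => ‖((m : ℂ) + 1) * (k z - b) + (z - a) * deriv k z‖) a := by
        fun_prop
      simpa [ContinuousAt, ← hb] using this
    filter_upwards [h1.eventually (gt_mem_nhds (show (0:ℝ) < ‖b‖ / 20 by positivity)),
      hFk.eventually_nhds, hk.eventually_analyticAt] with z hz hz2 hz3
    have hd : HasDerivAt f (1 + (((m + 1 : ℕ) : ℂ) * (z - a) ^ m * 1 * k z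
        + (z - a) ^ (m + 1) * deriv k z)) z := by
      have h2 : HasDerivAt (fun z => z + (z - a) ^ (m + 1) * k z)
          (1 + (((m + 1 : ℕ) : ℂ) * (z - a) ^ m * 1 * k z
        + (z - a) ^ (m + 1) * deriv k z)) z :=
        (hasDerivAt_id z).add ((((hasDerivAt_id z).sub_const a).pow (m + 1)).mul
          hz3.differentiableAt.hasDerivAt)
      refine h2.congr_of_eventuallyEq (hz2.mono fun w hw => ?_)
      simp only
      rw [← smul_eq_mul, ← hw]; ring
    rw [hd.deriv]
    have : 1 + (((m + 1 : ℕ) : ℂ) * (z - a) ^ m * 1 * k z + (z - a) ^ (m + 1) * deriv k z) - 1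
        - (((m : ℝ) : ℂ) + 1) * u z
        = (z - a) ^ m * (((m : ℂ) + 1) * (k z - b) + (z - a) * deriv k z) := by
      simp only [u]; push_cast; ring
    rw [this]
    simp only [u, norm_mul]
    nlinarith [norm_nonneg ((z - a) ^ m)]
  have E4 : ∀ᶠ z in 𝓝 a, ‖u z‖ ≤ 1 / (4 * ((m : ℝ) + 2) ^ 2) := by
    have : Tendsto (fun z => ‖u z‖) (𝓝 a) (𝓝 0) := by
      have : ContinuousAt (fun z => ‖u z‖) a := by
        simp only [u]; fun_prop
      simpa [ContinuousAt, u, hm0] using this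
    exact (this.eventually (gt_mem_nhds (by positivity))).mono fun z hz => hz.le
  have E5 : ∀ᶠ z in 𝓝[≠] a, ‖v (f z) - v z - m‖ ≤ 1 / 4 := by
    let G : ℂ → ℂ := fun s => ((1 + s) ^ m)⁻¹
    have hG : HasDerivAt G (-m) 0 := by
      have h1 : HasDerivAt (fun s : ℂ => (1 + s) ^ m) ((m : ℂ) * (1 + 0) ^ (m - 1) * 1) 0 :=
        ((hasDerivAt_id (0 : ℂ)).const_add 1).pow m
      have h2 := h1.fun_inv (by simp)
      have e : -((m : ℂ) * (1 + 0) ^ (m - 1) * 1) / ((1 + 0) ^ m) ^ 2 = -m := by simp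
      rw [e] at h2
      exact h2
    have hs : Tendsto (fun z => (z - a) ^ m * k z) (𝓝[≠] a) (𝓝[≠] 0) := by
      refine tendsto_nhdsWithin_iff.2 ⟨?_, ?_⟩
      · have hkc := hk.continuousAt
        have : ContinuousAt (fun z => (z - a) ^ m * k z) a := by fun_prop
        have h2 : Tendsto (fun z => (z - a) ^ m * k z) (𝓝 a) (𝓝 0) := by
          simpa [ContinuousAt, hm0] using this
        exact h2.mono_left nhdsWithin_le_nhds
      · have := hk.continuousAt.eventually_ne hk0
        filter_upwards [this.filter_mono nhdsWithin_le_nhds, self_mem_nhdsWithin] with z hz hz2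
        exact mul_ne_zero (pow_ne_zero _ (sub_ne_zero.2 hz2)) hz
    have hsl := (hasDerivAt_iff_tendsto_slope.1 hG).comp hs
    have hlim : Tendsto (fun z => -(k z / b) * slope G 0 ((z - a) ^ m * k z)) (𝓝[≠] a)
        (𝓝 (-(b / b) * (-m))) :=
      (((hk.continuousAt.tendsto.mono_left nhdsWithin_le_nhds).div_const b).neg).mul hsl
    have hlim' : Tendsto (fun z => ‖-(k z / b) * slope G 0 ((z - a) ^ m * k z) - m‖) (𝓝[≠] a)
        (𝓝 0) := by
      have := (hlim.sub_const (m : ℂ)).norm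
      simpa [div_self hk0] using this
    have hne := hk.continuousAt.eventually_ne hk0
    filter_upwards [hlim'.eventually (gt_mem_nhds (show (0:ℝ) < 1 / 4 by norm_num)),
      self_mem_nhdsWithin, hne.filter_mono nhdsWithin_le_nhds,
      E1.filter_mono nhdsWithin_le_nhds] with z hz hza hkz hz1
    have hza' : z - a ≠ 0 := sub_ne_zero.2 hza
    have : v (f z) - v z = -(k z / b) * slope G 0 ((z - a) ^ m * k z) := by
      have hG0 : G 0 = 1 := by simp [G]
      simp only [v, u, slope_def_field, hG0, hz1, mul_pow, mul_inv]
      simp only [G]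
      field_simp
      ring
    rw [this]
    exact hz.le
  rw [eventually_nhdsWithin_iff] at E5
  obtain ⟨δ₀, hδ₀, hE⟩ := Metric.eventually_nhds_iff_ball.1
    (E1.and (E2.and (E3.and (E4.and E5))))
  set δ₁ := min δ δ₀ with hδ₁
  have hδ₁pos : 0 < δ₁ := lt_min hδ hδ₀
  have hva : v a = 0 := by simp [v, u, hm0]
  have hnear : ∀ ε : ℝ, 0 < ε → ∀ z, (‖b‖ * ε ^ m)⁻¹ < (v z).re → ‖z - a‖ < ε := by
    intro ε hε z hz
    have h1 : (‖b‖ * ε ^ m)⁻¹ < ‖v z‖ := hz.trans_le (Complex.re_le_norm _)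
    by_contra hle
    push Not at hle
    have h2 : ‖v z‖ ≤ (‖b‖ * ε ^ m)⁻¹ := by
      simp only [v, u, norm_neg, norm_inv, norm_mul, norm_pow]
      exact inv_anti₀ (by positivity) (by gcongr)
    linarith
  set R := (‖b‖ * δ₁ ^ m)⁻¹ with hR
  have hRpos : 0 < R := by positivity
  let S : Set ℂ := {z | R < (v z).re}
  have hSball : ∀ z ∈ S, z ∈ ball a δ₁ := fun z hz => by
    rw [mem_ball, dist_eq_norm]
    exact hnear δ₁ hδ₁pos z hz
  have haS : a ∉ S := fun h => by
    simp only [S, Set.mem_ofPred_eq, hva, Complex.zero_re] at h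
    linarith
  have hSne : ∀ z ∈ S, z ≠ a := fun z hz h => haS (h ▸ hz)
  have hE' : ∀ z ∈ S, _ := fun z hz => hE z (ball_subset_ball (min_le_right _ _) (hSball z hz))
  have hstep : ∀ z ∈ S, ∃ w : ℂ, v (f z) = v z + w ∧ ‖w - m‖ ≤ 1 / 4 := fun z hz =>
    ⟨v (f z) - v z, by ring, (hE' z hz).2.2.2.2 (hSne z hz)⟩
  have hwre : ∀ w : ℂ, ‖w - m‖ ≤ 1 / 4 → (m : ℝ) - 1 / 4 ≤ w.re ∧ ‖w‖ ≤ m + 1 / 4 := by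
    intro w hw
    constructor
    · have := (abs_le.1 ((Complex.abs_re_le_norm (w - m)).trans hw)).1
      simp at this
      linarith
    · have h1 : w = (w - m) + m := by ring
      calc ‖w‖ = ‖(w - m) + m‖ := by rw [← h1]
        _ ≤ ‖w - m‖ + ‖(m : ℂ)‖ := norm_add_le _ _
        _ ≤ _ := by rw [Complex.norm_natCast]; linarith
  have hSre : ∀ z ∈ S, (v z).re + 1 / 2 ≤ (v (f z)).re := fun z hz => by
    obtain ⟨w, hw, hw'⟩ := hstep z hz
    have := (hwre w hw').1
    rw [hw, Complex.add_re]
    linarith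
  have hSmaps : MapsTo f S S := fun z hz => by
    have h1 := hSre z hz
    have h2 : R < (v z).re := hz
    show R < (v (f z)).re
    linarith
  have hSiter : ∀ z ∈ S, ∀ n : ℕ, f^[n] z ∈ S ∧ (n : ℝ) * (1 / 2) ≤ (v (f^[n] z)).re := by
    intro z hz n
    induction n with
    | zero =>
      refine ⟨hz, ?_⟩
      have h2 : R < (v z).re := hz
      simp
      linarith
    | succ n ih =>
      rw [iterate_succ_apply']
      refine ⟨hSmaps ih.1, ?_⟩
      have := hSre _ ih.1
      push_cast
      linarith [ih.2]
  have hStend : ∀ z ∈ S, Tendsto (fun n => f^[n] z) atTop (𝓝 a) := by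
    intro z hz
    rw [Metric.tendsto_atTop]
    intro ε hε
    obtain ⟨N, hN⟩ := exists_nat_gt (2 * (‖b‖ * ε ^ m)⁻¹)
    refine ⟨N, fun n hn => ?_⟩
    rw [dist_eq_norm]
    refine hnear ε hε _ ?_
    have h1 := (hSiter z hz n).2
    have h2 : (N : ℝ) ≤ n := by exact_mod_cast hn
    linarith
  -- the narrower region
  let T : Set ℂ := {z | 2 * R < (v z).re ∧ ‖v z‖ ≤ 2 * (v z).re}
  have hTS : T ⊆ S := fun z hz => by
    have h1 : 2 * R < (v z).re := hz.1
    show R < (v z).re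
    linarith
  have hTmaps : MapsTo f T T := fun z hz => by
    obtain ⟨w, hw, hw'⟩ := hstep z (hTS hz)
    obtain ⟨h1, h2⟩ := hwre w hw'
    refine ⟨?_, ?_⟩
    · have := hSre z (hTS hz)
      have := hz.1
      linarith
    · rw [hw, Complex.add_re]
      have := norm_add_le (v z) w
      have := hz.2
      linarith
  obtain ⟨ζ, hζ⟩ := IsAlgClosed.exists_pow_nat_eq (-(((2 * R + 1 : ℝ) : ℂ) * b)⁻¹)
    (Nat.pos_of_ne_zero hm0)
  have hz₀v : v (a + ζ) = ((2 * R + 1 : ℝ) : ℂ) := by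
    have hRne : ((2 * R + 1 : ℝ) : ℂ) ≠ 0 := by
      exact_mod_cast (by positivity : (2 * R + 1 : ℝ) ≠ 0)
    simp only [v, u, add_sub_cancel_left, hζ]
    field_simp
  have hz₀T : a + ζ ∈ T := by
    refine ⟨?_, ?_⟩
    · rw [hz₀v, Complex.ofReal_re]; linarith
    · rw [hz₀v, Complex.ofReal_re, Complex.norm_real, Real.norm_of_nonneg (by positivity)]
      linarith
  have hTiter : ∀ n, f^[n] (a + ζ) ∈ T := fun n => hTmaps.iterate n hz₀T
  obtain ⟨κ, hκ, hκ'⟩ : ∃ κ : ℝ, 0 < κ ∧ ∀ t : ℂ, ‖t‖ < κ → ‖((1 + t) ^ m)⁻¹ - 1‖ ≤ 1 / 4 := by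
    have hc : ContinuousAt (fun t : ℂ => ‖((1 + t) ^ m)⁻¹ - 1‖) 0 := by
      refine ContinuousAt.norm (ContinuousAt.sub (ContinuousAt.inv₀ (by fun_prop) (by simp))
        continuousAt_const)
    have hc' : Tendsto (fun t : ℂ => ‖((1 + t) ^ m)⁻¹ - 1‖) (𝓝 0) (𝓝 0) := by
      simpa [ContinuousAt] using hc
    obtain ⟨κ, hκ, h⟩ := Metric.eventually_nhds_iff.1
      (hc'.eventually (gt_mem_nhds (show (0:ℝ) < 1 / 4 by norm_num)))
    exact ⟨κ, hκ, fun t ht => (h (by simpa using ht)).le⟩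
  refine ⟨S, a + ζ, κ, hκ, fun z hz => ball_subset_ball (min_le_left _ _) (hSball z hz), haS,
    hSmaps, hStend, hTS hz₀T, ?_, ?_⟩
  · intro n z' hz'
    have hT := hTiter n
    set z := f^[n] (a + ζ)
    have hza : z - a ≠ 0 := sub_ne_zero.2 (hSne z (hTS hT))
    have hzan : 0 < ‖z - a‖ := norm_pos_iff.2 hza
    rw [mem_ball, dist_eq_norm] at hz'
    have ht : ‖(z' - z) / (z - a)‖ < κ := by
      rw [norm_div, div_lt_iff₀ hzan]
      exact hz'
    have h1 := hκ' _ ht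
    have h2 : z' - a = (z - a) * (1 + (z' - z) / (z - a)) := by
      field_simp
      ring
    have h3 : v z' = v z * ((1 + (z' - z) / (z - a)) ^ m)⁻¹ := by
      simp only [v, u]
      rw [h2, mul_pow, ← mul_assoc, mul_inv (b * (z - a) ^ m)]
      ring
    have h4 : ‖v z' - v z‖ ≤ ‖v z‖ * (1 / 4) := by
      have : v z' - v z = v z * (((1 + (z' - z) / (z - a)) ^ m)⁻¹ - 1) := by rw [h3]; ring
      rw [this, norm_mul]
      gcongr
    have h5 := (abs_le.1 ((Complex.abs_re_le_norm _).trans h4)).1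
    rw [Complex.sub_re] at h5
    have h6 := hT.1
    have h7 := hT.2
    show R < (v z').re
    linarith
  · intro n
    have hT := hTiter n
    rw [iterate_succ_apply']
    set z := f^[n] (a + ζ)
    have hza : z - a ≠ 0 := sub_ne_zero.2 (hSne z (hTS hT))
    obtain ⟨e1, e2, e3, e4, -⟩ := hE' z (hTS hT)
    rw [e1, norm_mul, mul_pow, mul_comm]
    have hu0 : u z ≠ 0 := mul_ne_zero hk0 (pow_ne_zero _ hza)
    have hure : (u z).re ≤ -(‖u z‖ / 2) := by
      have h1 : u z = -(v z)⁻¹ := by simp [v]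
      have hv0 : v z ≠ 0 := by simp [v, hu0]
      have hvn : 0 < ‖v z‖ := norm_pos_iff.2 hv0
      rw [h1, norm_neg, norm_inv, Complex.neg_re, Complex.inv_re, Complex.normSq_eq_norm_sq]
      have h2 := hT.2
      rw [neg_le_neg_iff, le_div_iff₀ (by positivity)]
      have : ‖v z‖⁻¹ / 2 * ‖v z‖ ^ 2 = ‖v z‖ / 2 := by field_simp
      linarith
    gcongr
    exact petal_ineq hmR e3 e2 hure e4

lemma PLSetting.iter_analytic {g : ℂ → ℂ} {U' U : Set ℂ} {d : ℕ} (H : PLSetting g U' U d)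
    {z : ℂ} {n : ℕ} (h : ∀ i < n, g^[i] z ∈ U') : AnalyticAt ℂ (g^[n]) z := by
  induction n with
  | zero => exact analyticAt_id
  | succ n ih =>
    rw [iterate_succ']
    exact (H.analyticAt (h n (by omega))).comp (ih fun i hi => h i (by omega))

/-- An iterate of `g` is not the identity near a periodic point. -/
lemma PLSetting.not_id {g : ℂ → ℂ} {U' U : Set ℂ} {d : ℕ} (H : PLSetting g U' U d)
    {a : ℂ} {P : ℕ} (hP : 1 ≤ P) (horb : ∀ n : ℕ, g^[n] a ∈ U') :
    ¬ ∀ᶠ z in 𝓝 a, g^[P] z = z := by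
  intro hid
  let W : Set ℂ := {z | (∀ i ≤ P, g^[i] z ∈ U') ∧ ∀ᶠ w in 𝓝 z, g^[P] w = w}
  have hWo : IsOpen W := by
    rw [isOpen_iff_mem_nhds]
    rintro z ⟨hz1, hz2⟩
    have h1 : ∀ᶠ w in 𝓝 z, ∀ i ∈ Set.Iic P, g^[i] w ∈ U' := by
      rw [Filter.eventually_all_finite (Set.finite_Iic P)]
      intro i hi
      exact (H.iter_analytic fun j hj => hz1 j (hj.le.trans hi)).continuousAt.eventually
        (H.disk'.1.mem_nhds (hz1 i hi))
    filter_upwards [h1, eventually_eventually_nhds.2 hz2] with w hw1 hw2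
    exact ⟨hw1, hw2⟩
  have hsub : U' ⊆ W := by
    refine H.disk'.2.1.isPreconnected.subset_of_closure_inter_subset hWo
      ⟨a, horb 0, fun i _ => horb i, hid⟩ ?_
    rintro b ⟨hbW, hbU⟩
    by_contra hb
    obtain ⟨K, hK, hbK, hKU⟩ := exists_compact_subset H.disk'.1 hbU
    let Kf : ℕ → Set ℂ := fun j => (fun S => U' ∩ g ⁻¹' S)^[j] K
    have hKs : ∀ j, Kf (j + 1) = U' ∩ g ⁻¹' (Kf j) := fun j => iterate_succ_apply' _ _ _
    have hKf : ∀ j, IsCompact (Kf j) ∧ Kf j ⊆ U' := by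
      intro j
      induction j with
      | zero => exact ⟨hK, hKU⟩
      | succ j ih =>
        rw [hKs]
        exact ⟨H.proper _ (ih.2.trans H.subset) ih.1, inter_subset_left⟩
    have hw : ∀ w ∈ W, w ∈ K → ∀ j ≤ P, g^[P - j] w ∈ Kf j := by
      rintro w ⟨hw1, hw2⟩ hwK j
      induction j with
      | zero =>
        intro _
        have := hw2.self_of_nhds
        simp only [tsub_zero]
        rw [this]; exact hwK
      | succ j ih =>
        intro hj
        rw [hKs]
        refine ⟨hw1 _ (by omega), ?_⟩
        rw [mem_preimage, ← iterate_succ_apply' g]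
        have : (P - (j + 1)).succ = P - j := by omega
        rw [this]
        exact ih (by omega)
    have hfr : ∃ᶠ w in 𝓝 b, w ∈ W ∧ w ∈ K :=
      (mem_closure_iff_frequently.1 hbW).and_eventually (mem_interior_iff_mem_nhds.1 hbK)
    have hbi : ∀ i, i ≤ P → g^[i] b ∈ U' := by
      intro i
      induction i using Nat.strong_induction_on with
      | _ i ih =>
        intro hi
        have hc : ContinuousAt (g^[i]) b :=
          (H.iter_analytic fun k hk => ih k hk (by omega)).continuousAt
        refine (hKf (P - i)).2 ((hKf (P - i)).1.isClosed.mem_of_frequently_of_tendsto ?_ hc)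
        refine hfr.mono fun w hw' => ?_
        have := hw w hw'.1 hw'.2 (P - i) (by omega)
        rwa [Nat.sub_sub_self hi] at this
    have han : AnalyticAt ℂ (g^[P]) b := H.iter_analytic fun i hi => hbi i hi.le
    refine hb ⟨hbi, ?_⟩
    refine (han.frequently_eq_iff_eventually_eq (g := fun z => z) analyticAt_id).1 ?_
    rw [frequently_nhdsWithin_iff]
    refine hfr.mono fun w hw' => ⟨hw'.1.2.self_of_nhds, ?_⟩
    rintro rfl
    exact hb hw'.1
  apply H.ne
  refine H.subset.antisymm fun w hw => ?_
  obtain ⟨z, hz, hzw⟩ := H.deg.1 w hw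
  have := (hsub hz).1 1 hP
  rw [← show g z = w from hzw]
  exact this

lemma PLSetting.ne_univ {g : ℂ → ℂ} {U' U : Set ℂ} {d : ℕ} (H : PLSetting g U' U d) :
    U' ≠ univ := by
  intro h
  apply H.ne
  exact H.subset.antisymm (by rw [h]; exact subset_univ _)

/-- Convergence of the orbit along multiples of a period, staying close to the periodic point,
implies attraction to the cycle. -/
lemma PLSetting.attracted_of {g : ℂ → ℂ} {U' U : Set ℂ} {d : ℕ} (H : PLSetting g U' U d)
    {a : ℂ} {P : ℕ} (hP : 1 ≤ P) (horb : ∀ n : ℕ, g^[n] a ∈ U') :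
    ∃ δ > 0, ∀ z, (∀ n, (g^[P])^[n] z ∈ ball a δ) →
      Tendsto (fun n => (g^[P])^[n] z) atTop (𝓝 a) → attractedTo g U' a z := by
  have hc : ∀ j, ContinuousAt (g^[j]) a := fun j =>
    (H.iter_analytic fun i _ => horb i).continuousAt
  have h1 : ∀ᶠ w in 𝓝 a, ∀ i ∈ Set.Iic P, g^[i] w ∈ U' := by
    rw [Filter.eventually_all_finite (Set.finite_Iic P)]
    intro i hi
    exact (hc i).eventually (H.disk'.1.mem_nhds (horb i))
  obtain ⟨δ, hδ, hb⟩ := Metric.eventually_nhds_iff_ball.1 h1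
  refine ⟨δ, hδ, fun z hz ht => ?_⟩
  have hn : ∀ n, g^[n] z = g^[n % P] ((g^[P])^[n / P] z) := by
    intro n
    rw [← iterate_mul, ← iterate_add_apply, Nat.mod_add_div]
  refine ⟨fun n => ?_, ?_⟩
  · rw [hn]
    exact hb _ (hz _) _ (Nat.mod_lt _ hP).le
  · rw [Metric.tendsto_atTop]
    intro ε hε
    have h2 : ∀ᶠ w in 𝓝 a, ∀ i ∈ Set.Iic P, dist (g^[i] w) (g^[i] a) < ε := by
      rw [Filter.eventually_all_finite (Set.finite_Iic P)]
      intro i hi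
      exact (hc i).eventually (Metric.ball_mem_nhds _ hε)
    obtain ⟨N, hN⟩ := eventually_atTop.1 (ht.eventually h2)
    refine ⟨P * N, fun n hnN => ?_⟩
    rw [Real.dist_0_eq_abs, abs_of_nonneg infDist_nonneg, hn]
    have hmem : g^[n % P] a ∈ cycleSet g a := ⟨n % P, rfl⟩
    refine (infDist_le_dist_of_mem hmem).trans_lt ?_
    refine hN _ ?_ _ (Nat.mod_lt _ hP).le
    rw [Nat.le_div_iff_mul_le (by omega), mul_comm]
    exact hnN

lemma attractedTo_of_image {g : ℂ → ℂ} {U' : Set ℂ} {a z : ℂ} (hz : z ∈ U')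
    (h : attractedTo g U' a (g z)) : attractedTo g U' a z := by
  refine ⟨fun n => ?_, ?_⟩
  · cases n with
    | zero => exact hz
    | succ n => exact h.1 n
  · exact (tendsto_add_atTop_iff_nat (f := fun n => infDist (g^[n] z) (cycleSet g a)) 1).1 h.2

lemma cycleSet_maps {g : ℂ → ℂ} {a z : ℂ} (hz : z ∈ cycleSet g a) (n : ℕ) :
    g^[n] z ∈ cycleSet g a := by
  obtain ⟨m, rfl⟩ := hz
  exact ⟨n + m, by simp only [iterate_add_apply]⟩

lemma PLSetting.key_bound {g : ℂ → ℂ} {U' U : Set ℂ} {d : ℕ} (H : PLSetting g U' U d)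
    {A : ℂ → Prop} (hAU : ∀ z, A z → z ∈ U') (hA : ∀ z ∈ U', A (g z) → A z)
    (hAc : ∀ c ∈ critPts g U', ¬ A c) {z₀ : ℂ} (hz₀ : z₀ ∈ U') :
    ∃ C, 0 < C ∧ ∀ (N : ℕ) (r : ℝ), (∀ i < N, g^[i] z₀ ∈ U') → 0 < r →
      (∀ z ∈ ball (g^[N] z₀) r, A z) → r ≤ C * ‖deriv (g^[N]) z₀‖ := by
  obtain ⟨C, hC, hb⟩ := deriv_bound H.disk' H.ne_univ hz₀
  refine ⟨C, hC, fun N r hN hr hball => ?_⟩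
  obtain ⟨h, hd, hhA, hh, hx⟩ := H.lift_iter hAU hA hAc hr hball N z₀ hN rfl
  have h1 := hb _ r h hr hd (fun w hw => hAU _ (hhA w hw)) hx
  have hmem : ball (g^[N] z₀) r ∈ 𝓝 (g^[N] z₀) := ball_mem_nhds _ hr
  have hdh : HasDerivAt h (deriv h (g^[N] z₀)) (g^[N] z₀) :=
    (hd.differentiableAt hmem).hasDerivAt
  have hdg : HasDerivAt (g^[N]) (deriv (g^[N]) z₀) (h (g^[N] z₀)) := by
    rw [hx]; exact (H.iter_analytic hN).differentiableAt.hasDerivAt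
  have h2 := hdg.comp _ hdh
  have h3 : HasDerivAt (g^[N] ∘ h) 1 (g^[N] z₀) := by
    refine (hasDerivAt_id _).congr_of_eventuallyEq ?_
    filter_upwards [hmem] with w hw
    exact hh w hw
  have h4 := h2.unique h3
  have h5 : ‖deriv (g^[N]) z₀‖ * ‖deriv h (g^[N] z₀)‖ = 1 := by
    rw [← norm_mul, h4, norm_one]
  calc r = ‖deriv (g^[N]) z₀‖ * (‖deriv h (g^[N] z₀)‖ * r) := by
        rw [← mul_assoc, h5, one_mul]
    _ ≤ ‖deriv (g^[N]) z₀‖ * C := by gcongr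
    _ = _ := mul_comm _ _

lemma PLSetting.attracting_case {g : ℂ → ℂ} {U' U : Set ℂ} {d : ℕ}
    (H : PLSetting g U' U d) {a : ℂ} {p : ℕ} (hp : 1 ≤ p)
    (horb : ∀ n : ℕ, g^[n] a ∈ U') (hper : g^[p] a = a) (hl : ‖deriv (g^[p]) a‖ < 1) :
    ∃ c ∈ critPts g U', attractedTo g U' a c := by
  by_contra hcon
  push Not at hcon
  obtain ⟨δ, hδ, hatt⟩ := H.attracted_of hp horb
  set f := g^[p] with hf
  have hd : HasDerivAt f (deriv f a) a :=
    (H.iter_analytic fun i _ => horb i).differentiableAt.hasDerivAt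
  obtain ⟨K, hK1, hK2⟩ := exists_between hl
  have hK0 : 0 ≤ K := (norm_nonneg _).trans hK1.le
  have hev : ∀ᶠ z in 𝓝 a, ‖f z - a‖ ≤ K * ‖z - a‖ := by
    have := (hasDerivAt_iff_isLittleO.1 hd).def (sub_pos.2 hK1)
    filter_upwards [this] with z hz
    rw [hper, smul_eq_mul] at hz
    calc ‖f z - a‖ = ‖(f z - a - (z - a) * deriv f a) + (z - a) * deriv f a‖ := by ring_nf
      _ ≤ ‖f z - a - (z - a) * deriv f a‖ + ‖(z - a) * deriv f a‖ := norm_add_le _ _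
      _ ≤ (K - ‖deriv f a‖) * ‖z - a‖ + ‖z - a‖ * ‖deriv f a‖ := by
        rw [norm_mul]; gcongr
      _ = _ := by ring
  obtain ⟨r₁, hr₁, hb⟩ := Metric.eventually_nhds_iff_ball.1 hev
  let r := min r₁ δ
  have hr : 0 < r := lt_min hr₁ hδ
  have hit : ∀ z ∈ ball a r, ∀ n, f^[n] z ∈ ball a r ∧ ‖f^[n] z - a‖ ≤ K ^ n * ‖z - a‖ := by
    intro z hz n
    induction n with
    | zero => exact ⟨hz, by simp⟩
    | succ n ih =>
      have h1 := hb _ (ball_subset_ball (min_le_left _ _) ih.1)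
      rw [iterate_succ_apply']
      refine ⟨?_, ?_⟩
      · rw [mem_ball_iff_norm]
        refine (h1.trans (mul_le_of_le_one_left (norm_nonneg _) hK2.le)).trans_lt ?_
        exact mem_ball_iff_norm.1 ih.1
      · calc _ ≤ _ := h1
          _ ≤ K * (K ^ n * ‖z - a‖) := by gcongr; exact ih.2
          _ = _ := by ring
  have hball : ∀ z ∈ ball a r, attractedTo g U' a z := by
    intro z hz
    refine hatt z (fun n => ball_subset_ball (min_le_right _ _) (hit z hz n).1) ?_
    rw [tendsto_iff_norm_sub_tendsto_zero]
    refine squeeze_zero (fun _ => norm_nonneg _) (fun n => (hit z hz n).2) ?_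
    simpa using (tendsto_pow_atTop_nhds_zero_of_lt_one hK0 hK2).mul_const ‖z - a‖
  obtain ⟨C, hC, hkey⟩ := H.key_bound (A := attractedTo g U' a) (fun z hz => hz.1 0)
    (fun z hz h => attractedTo_of_image hz h) hcon (horb 0)
  have hle : ∀ n : ℕ, r ≤ C * ‖deriv f a‖ ^ n := by
    intro n
    have hgn : g^[p * n] = f^[n] := iterate_mul g p n
    have hfix : f^[n] a = a := iterate_fixed hper n
    have := hkey (p * n) r (fun i _ => horb i) hr (by
      show ∀ z ∈ ball (g^[p * n] a) r, _
      rw [hgn, hfix]; exact hball)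
    change r ≤ C * ‖deriv (g^[p * n]) a‖ at this
    rw [hgn, (hd.iterate _ hper n).deriv, norm_pow] at this
    exact this
  have ht : Tendsto (fun n : ℕ => C * ‖deriv f a‖ ^ n) atTop (𝓝 0) := by
    simpa using (tendsto_pow_atTop_nhds_zero_of_lt_one (norm_nonneg _) hl).const_mul C
  exact absurd (ge_of_tendsto' ht hle) (not_le.2 hr)

lemma PLSetting.parabolic_case {g : ℂ → ℂ} {U' U : Set ℂ} {d : ℕ}
    (H : PLSetting g U' U d) {a : ℂ} {P : ℕ} (hP : 1 ≤ P)
    (horb : ∀ n : ℕ, g^[n] a ∈ U') (hper : g^[P] a = a) (hl : deriv (g^[P]) a = 1) :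
    ∃ c ∈ critPts g U', attractedTo g U' a c ∧ ∀ n : ℕ, g^[n] c ∉ cycleSet g a := by
  by_contra hcon
  push Not at hcon
  obtain ⟨δ, hδ, hatt⟩ := H.attracted_of hP horb
  have hnid := H.not_id hP horb
  have hfan : AnalyticAt ℂ (g^[P]) a := H.iter_analytic fun i _ => horb i
  set f := g^[P] with hf
  obtain ⟨S, z₀, κ, hκ, hSb, haS, hSS, hSt, hz₀, hSball, hSd⟩ :=
    exists_petal hfan hper hl hnid hδ
  have hSn : ∀ z ∈ S, ∀ n, f^[n] z ∈ S := fun z hz n => hSS.iterate n hz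
  let A : ℂ → Prop := fun z => attractedTo g U' a z ∧ ∀ n : ℕ, g^[n] z ∉ cycleSet g a
  have hgn : ∀ n, g^[P * n] = f^[n] := fun n => iterate_mul g P n
  have hSA : ∀ z ∈ S, A z := by
    intro z hz
    refine ⟨hatt z (fun n => hSb (hSn z hz n)) (hSt z hz), ?_⟩
    rintro n ⟨m, hm⟩
    have h2 : g^[n] z ∈ cycleSet g a := ⟨m, hm⟩
    have h3 : f^[n] z ∈ cycleSet g a := by
      rw [← hgn, show P * n = (P * n - n) + n from
        (Nat.sub_add_cancel (by nlinarith)).symm, iterate_add_apply]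
      exact cycleSet_maps h2 _
    obtain ⟨k, hk⟩ := h3
    simp only at hk
    -- the landing point is fixed by `f`, hence equal to the limit `a`
    have hfix : f (g^[k] a) = g^[k] a := by
      have : g^[P] a = a := hper
      rw [hf, ← iterate_add_apply, add_comm, iterate_add_apply, this]
    have h4 : Tendsto (fun j => f^[j + n] z) atTop (𝓝 a) :=
      (tendsto_add_atTop_iff_nat n).2 (hSt z hz)
    have h5 : ∀ j, f^[j + n] z = g^[k] a := fun j => by
      rw [iterate_add_apply, ← hk]; exact iterate_fixed hfix j
    simp only [h5] at h4
    have h6 : g^[k] a = a := tendsto_nhds_unique tendsto_const_nhds h4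
    apply haS
    rw [← h6, hk]
    exact hSn z hz n
  have hU₀ : ∀ i, g^[i] z₀ ∈ U' := (hSA z₀ hz₀).1.1
  obtain ⟨C, hC, hkey⟩ := H.key_bound (A := A) (fun z hz => hz.1.1 0)
    (fun z hz h => ⟨attractedTo_of_image hz h.1, fun n hn =>
      h.2 n (by
        have := cycleSet_maps hn 1
        rwa [← iterate_add_apply, add_comm, iterate_add_apply] at this)⟩)
    (fun c hc h => by
      obtain ⟨n, hn⟩ := hcon c hc h.1
      exact h.2 n hn) (hU₀ 0)
  have hne : ∀ n, 0 < ‖f^[n] z₀ - a‖ := by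
    intro n
    rw [norm_pos_iff, sub_ne_zero]
    intro h
    exact haS (h ▸ hSn z₀ hz₀ n)
  have hfn : ∀ n, DifferentiableAt ℂ (f^[n]) z₀ := fun n => by
    rw [← hgn]
    exact (H.iter_analytic fun i _ => hU₀ i).differentiableAt
  have hff : ∀ n, DifferentiableAt ℂ f (f^[n] z₀) := fun n =>
    (H.iter_analytic fun i _ => (hSA _ (hSn z₀ hz₀ n)).1.1 i).differentiableAt
  have hD : ∀ n, ‖deriv (f^[n]) z₀‖ ^ 2 * ‖z₀ - a‖ ^ 3 ≤ ‖f^[n] z₀ - a‖ ^ 3 := by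
    intro n
    induction n with
    | zero =>
      have : deriv (f^[0]) z₀ = 1 := deriv_id z₀
      rw [this]; simp
    | succ n ih =>
      have h1 : deriv (f^[n + 1]) z₀ = deriv f (f^[n] z₀) * deriv (f^[n]) z₀ := by
        rw [iterate_succ', deriv_comp z₀ (hff n) (hfn n)]
      rw [h1, norm_mul]
      calc _ = ‖deriv f (f^[n] z₀)‖ ^ 2 * (‖deriv (f^[n]) z₀‖ ^ 2 * ‖z₀ - a‖ ^ 3) := by ring
        _ ≤ ‖deriv f (f^[n] z₀)‖ ^ 2 * ‖f^[n] z₀ - a‖ ^ 3 := by gcongr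
        _ ≤ _ := hSd n
  have hlow : ∀ n, κ * ‖f^[n] z₀ - a‖ ≤ C * ‖deriv (f^[n]) z₀‖ := by
    intro n
    have := hkey (P * n) (κ * ‖f^[n] z₀ - a‖) (fun i _ => hU₀ i) (mul_pos hκ (hne n)) (by
      show ∀ z ∈ ball (g^[P * n] z₀) _, _
      rw [hgn]
      exact fun z hz => hSA z (hSball n hz))
    change _ ≤ C * ‖deriv (g^[P * n]) z₀‖ at this
    rwa [hgn] at this
  have hfin : ∀ n, κ ^ 2 * ‖z₀ - a‖ ^ 3 ≤ C ^ 2 * ‖f^[n] z₀ - a‖ := by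
    intro n
    have hx := hne n
    have h1 : (κ * ‖f^[n] z₀ - a‖) ^ 2 ≤ (C * ‖deriv (f^[n]) z₀‖) ^ 2 :=
      pow_le_pow_left₀ (by positivity) (hlow n) 2
    have h2 : (κ ^ 2 * ‖z₀ - a‖ ^ 3) * ‖f^[n] z₀ - a‖ ^ 2 ≤
        (C ^ 2 * ‖f^[n] z₀ - a‖) * ‖f^[n] z₀ - a‖ ^ 2 := by
      calc _ = (κ * ‖f^[n] z₀ - a‖) ^ 2 * ‖z₀ - a‖ ^ 3 := by ring
        _ ≤ (C * ‖deriv (f^[n]) z₀‖) ^ 2 * ‖z₀ - a‖ ^ 3 := by gcongr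
        _ = C ^ 2 * (‖deriv (f^[n]) z₀‖ ^ 2 * ‖z₀ - a‖ ^ 3) := by ring
        _ ≤ C ^ 2 * ‖f^[n] z₀ - a‖ ^ 3 := by gcongr; exact hD n
        _ = _ := by ring
    exact le_of_mul_le_mul_right h2 (by positivity)
  have ht : Tendsto (fun n => C ^ 2 * ‖f^[n] z₀ - a‖) atTop (𝓝 0) := by
    simpa using (tendsto_iff_norm_sub_tendsto_zero.1 (hSt z₀ hz₀)).const_mul (C ^ 2)
  have hpos : 0 < κ ^ 2 * ‖z₀ - a‖ ^ 3 := by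
    have h0 : 0 < ‖z₀ - a‖ := hne 0
    positivity
  exact absurd (ge_of_tendsto' ht hfin) (not_le.2 hpos)

/-- **Lemma.** The basin of every attracting or parabolic cycle of `g : U' → U` contains a
critical point of `g`. (For a parabolic cycle the basin excludes points eventually landing
on the cycle.) -/
theorem basin_contains_critical_point {g : ℂ → ℂ} {U' U : Set ℂ} {d : ℕ}
    (H : PLSetting g U' U d) {a : ℂ} {p : ℕ} (hp : 1 ≤ p)
    (horb : ∀ n : ℕ, g^[n] a ∈ U') (hper : g^[p] a = a) :
    (‖deriv (g^[p]) a‖ < 1 → ∃ c ∈ critPts g U', attractedTo g U' a c) ∧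
    ((∃ q : ℕ, 1 ≤ q ∧ (deriv (g^[p]) a) ^ q = 1) →
      ∃ c ∈ critPts g U', attractedTo g U' a c ∧ ∀ n : ℕ, g^[n] c ∉ cycleSet g a) := by
  refine ⟨H.attracting_case hp horb hper, ?_⟩
  rintro ⟨q, hq, hlq⟩
  have hd : HasDerivAt (g^[p]) (deriv (g^[p]) a) a :=
    (H.iter_analytic fun i _ => horb i).differentiableAt.hasDerivAt
  refine H.parabolic_case (P := p * q) (Nat.mul_pos hp hq) horb ?_ ?_
  · rw [iterate_mul]
    exact iterate_fixed hper q
  · rw [iterate_mul, (hd.iterate _ hper q).deriv, hlq]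
end
end

section
/- Fix a Jordan curve Γ₀ in U which encloses P_g, let V₀ be the Jordan domain bounded by Γ₀ (so P_g ⊂ V₀ ⊂ closure(V₀) ⊂ U), and set V_{-n} = g^{-n}(V₀) and Γ_n = ∂V_{-n} for n > 0 (each V_{-n} is simply connected and each Γ_n is a Jordan curve). Assume that Γ_n ∩ Γ₀ ≠ ∅ for all n. Then for every ε > 0 and every sufficiently large n, the map gⁿ has a repelling fixed point in the ε-neighborhood of Γ₀. -/
open Set Function Metric Topology Filter

noncomputable section

/-- `Γ ⊆ ℂ` is a Jordan curve: a homeomorphic image of the unit circle. -/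
def IsJordanCurve (Γ : Set ℂ) : Prop :=
  ∃ f : Metric.sphere (0 : ℂ) 1 → ℂ, Continuous f ∧ Function.Injective f ∧ Set.range f = Γ

/-- `g^{-n}(V)`: points whose first `n` iterates are defined (stay in `U'`) and whose
`n`-th iterate lies in `V`. -/
def preIter (g : ℂ → ℂ) (U' V : Set ℂ) (n : ℕ) : Set ℂ :=
  {z | (∀ k < n, g^[k] z ∈ U') ∧ g^[n] z ∈ V}

/-- A set that spreads over balls inside `O` contains each preconnected set it meets. -/
lemma rnc_spread {O S A : Set ℂ} (hO : IsOpen O)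
    (hS : ∀ x r, 0 < r → ball x r ⊆ O → (S ∩ ball x r).Nonempty → ball x r ⊆ S)
    (hA : IsPreconnected A) (hAO : A ⊆ O) (hne : (A ∩ S).Nonempty) : A ⊆ S := by
  have key : ∀ x ∈ O, ∃ r > 0, ball x r ⊆ O ∧ (ball x r ⊆ S ∨ ball x r ∩ S = ∅) := by
    intro x hx
    obtain ⟨r, hr, hb⟩ := Metric.isOpen_iff.1 hO x hx
    refine ⟨r, hr, hb, ?_⟩
    by_cases h : (S ∩ ball x r).Nonempty
    · exact Or.inl (hS x r hr hb h)
    · right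
      rw [inter_comm]
      exact not_nonempty_iff_eq_empty.1 h
  have h1 : IsOpen (O ∩ S) := by
    rw [Metric.isOpen_iff]
    rintro x ⟨hx, hxS⟩
    obtain ⟨r, hr, hb, h | h⟩ := key x hx
    · exact ⟨r, hr, subset_inter hb h⟩
    · exact absurd (show x ∈ (∅ : Set ℂ) from h ▸ ⟨mem_ball_self hr, hxS⟩) (notMem_empty _)
  have h2 : IsOpen (O \ S) := by
    rw [Metric.isOpen_iff]
    rintro x ⟨hx, hxS⟩
    obtain ⟨r, hr, hb, h | h⟩ := key x hx
    · exact absurd (h (mem_ball_self hr)) hxS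
    · exact ⟨r, hr, fun y hy => ⟨hb hy, fun hyS => notMem_empty y (h ▸ ⟨hy, hyS⟩)⟩⟩
  rcases (isPreconnected_iff_subset_of_disjoint.1 hA) (O ∩ S) (O \ S) h1 h2
    (by rw [inter_union_sdiff]; exact hAO)
    (by ext z; simp; tauto) with h | h
  · exact h.trans inter_subset_right
  · obtain ⟨z, hzA, hzS⟩ := hne
    exact absurd hzS (h hzA).2

/-- Cauchy estimate in Lipschitz form. -/
lemma rnc_lip {f : ℂ → ℂ} {y : ℂ} {ρ M : ℝ} (hρ : 0 < ρ)
    (hf : DifferentiableOn ℂ f (ball y (2 * ρ))) (hM : ∀ u ∈ ball y (2 * ρ), ‖f u‖ ≤ M)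
    {u v : ℂ} (hu : u ∈ ball y ρ) (hv : v ∈ ball y ρ) : ‖f u - f v‖ ≤ M / ρ * ‖u - v‖ := by
  have hsub : ∀ x ∈ ball y ρ, ball x ρ ⊆ ball y (2 * ρ) := fun x hx =>
    ball_subset_ball' (by rw [mem_ball] at hx; linarith)
  have hsub' : ∀ x ∈ ball y ρ, closedBall x ρ ⊆ ball y (2 * ρ) := fun x hx =>
    closedBall_subset_ball' (by rw [mem_ball] at hx; linarith)
  refine Convex.norm_image_sub_le_of_norm_deriv_le (𝕜 := ℂ) (s := ball y ρ) ?_ ?_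
    (convex_ball y ρ) hv hu
  · intro x hx
    exact hf.differentiableAt (isOpen_ball.mem_nhds (hsub x hx (mem_ball_self hρ)))
  · intro x hx
    refine Complex.norm_deriv_le_of_forall_mem_sphere_norm_le hρ ?_ ?_
    · refine (hf.mono ?_).diffContOnCl
      exact closure_ball_subset_closedBall.trans (hsub' x hx)
    · intro z hz
      exact hM z (hsub' x hx (sphere_subset_closedBall hz))

/-- Montel's theorem along an ultrafilter, for uniformly bounded families on a ball. -/
lemma rnc_montel {ι : Type*} (𝒰 : Ultrafilter ι) (f : ι → ℂ → ℂ) {x : ℂ} {r M : ℝ}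
    (hf : ∀ᶠ i in (𝒰 : Filter ι), DifferentiableOn ℂ (f i) (ball x r) ∧
      ∀ y ∈ ball x r, ‖f i y‖ ≤ M) :
    ∃ Φ : ℂ → ℂ, DifferentiableOn ℂ Φ (ball x r) ∧
      TendstoLocallyUniformlyOn f Φ (𝒰 : Filter ι) (ball x r) := by
  have hpt : ∀ y, ∃ c : ℂ, y ∈ ball x r → Tendsto (fun i => f i y) (𝒰 : Filter ι) (𝓝 c) := by
    intro y
    by_cases hy : y ∈ ball x r
    · have := (isCompact_closedBall (0 : ℂ) M).ultrafilter_le_nhds (𝒰.map (fun i => f i y)) (by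
        rw [le_principal_iff]
        change ∀ᶠ i in (𝒰 : Filter ι), f i y ∈ closedBall (0 : ℂ) M
        filter_upwards [hf] with i hi
        simpa using hi.2 y hy)
      obtain ⟨c, -, hc⟩ := this
      exact ⟨c, fun _ => hc⟩
    · exact ⟨0, fun h => absurd h hy⟩
  choose Φ hΦ using hpt
  have hloc : TendstoLocallyUniformlyOn f Φ (𝒰 : Filter ι) (ball x r) := by
    rw [Metric.tendstoLocallyUniformlyOn_iff]
    intro ε hε y hy
    obtain ⟨ρ₀, hρ₀, hb⟩ := Metric.isOpen_iff.1 isOpen_ball y hy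
    obtain ⟨ρ, hρ, rfl⟩ : ∃ ρ, 0 < ρ ∧ ρ₀ = 2 * ρ := ⟨ρ₀ / 2, by linarith, by ring⟩
    set C := |M| / ρ + 1 with hC
    have hCpos : 0 < C := by positivity
    have hlip : ∀ᶠ i in (𝒰 : Filter ι), ∀ u ∈ ball y ρ, ‖f i u - f i y‖ ≤ C * ‖u - y‖ := by
      filter_upwards [hf] with i hi u hu
      have := rnc_lip hρ (hi.1.mono hb) (fun v hv => (hi.2 v (hb hv)).trans (le_abs_self M))
        hu (mem_ball_self hρ)
      refine this.trans ?_
      gcongr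
      rw [hC]; linarith
    have hΦlip : ∀ u ∈ ball y ρ, ‖Φ u - Φ y‖ ≤ C * ‖u - y‖ := by
      intro u hu
      have hub : u ∈ ball x r := hb (ball_subset_ball (by linarith) hu)
      refine le_of_tendsto (((hΦ u hub).sub (hΦ y hy)).norm) ?_
      filter_upwards [hlip] with i hi using hi u hu
    set δ := min ρ (ε / (3 * C)) with hδ
    have hδpos : 0 < δ := lt_min hρ (by positivity)
    refine ⟨ball y δ, mem_nhdsWithin_of_mem_nhds (ball_mem_nhds y hδpos), ?_⟩
    have h3 : ∀ᶠ i in (𝒰 : Filter ι), dist (f i y) (Φ y) < ε / 3 :=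
      (Metric.tendsto_nhds.1 (hΦ y hy)) (ε / 3) (by linarith)
    filter_upwards [hlip, h3] with i hi h3 u hu
    have huρ : u ∈ ball y ρ := ball_subset_ball (min_le_left _ _) hu
    have hud : C * ‖u - y‖ < ε / 3 := by
      have : ‖u - y‖ < ε / (3 * C) := by
        rw [← dist_eq_norm]; exact (mem_ball.1 hu).trans_le (min_le_right _ _)
      calc C * ‖u - y‖ < C * (ε / (3 * C)) := by gcongr
        _ = ε / 3 := by field_simp
    have e1 := hi u huρ
    have e2 := hΦlip u huρ
    rw [dist_eq_norm] at h3 ⊢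
    calc ‖Φ u - f i u‖ = ‖(Φ u - Φ y) + ((Φ y - f i y) + (f i y - f i u))‖ := by congr 1; ring
      _ ≤ ‖Φ u - Φ y‖ + (‖Φ y - f i y‖ + ‖f i y - f i u‖) :=
        (norm_add_le _ _).trans (by gcongr; exact norm_add_le _ _)
      _ < ε := by rw [norm_sub_rev (Φ y), norm_sub_rev (f i y) (f i u)]; linarith
  exact ⟨Φ, hloc.differentiableOn (hf.mono fun i h => h.1) isOpen_ball, hloc⟩

/-- A bounded coordinate with rational inverse on a simply connected proper domain. -/
lemma rnc_phi {W : Set ℂ} (hW : IsOpen W) (hsc : SimplyConnectedSpace W) (hne : W.Nonempty)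
    (hWu : W ≠ univ) :
    ∃ (φ : ℂ → ℂ) (p a : ℂ) (M : ℝ), DifferentiableOn ℂ φ W ∧ (∀ z ∈ W, ‖φ z‖ ≤ M) ∧
      ∀ z ∈ W, (z - p) * φ z ^ 2 = (1 - a * φ z) ^ 2 := by
  obtain ⟨p, hp⟩ := (ne_univ_iff_exists_notMem _).1 hWu
  obtain ⟨L, hLc, hL⟩ := Complex.exists_continuousOn_eqOn_exp_comp (U := W) hsc hW
    (g := fun z => z - p) (by fun_prop) (by
      rintro ⟨z, hz, h⟩
      exact hp (by rwa [sub_eq_zero.1 h] at hz))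
  set σ : ℂ → ℂ := fun z => Complex.exp (L z / 2) with hσ
  have hσ2 : ∀ z ∈ W, σ z ^ 2 = z - p := by
    intro z hz
    rw [← show Complex.exp (L z) = z - p from hL hz, hσ]
    simp only
    rw [← Complex.exp_nat_mul]; congr 1; push_cast; ring
  have hσ0 : ∀ z, σ z ≠ 0 := fun z => Complex.exp_ne_zero _
  have hσc : ContinuousOn σ W := by
    exact Complex.continuous_exp.comp_continuousOn (hLc.div_const 2)
  have hσd : ∀ z ∈ W, HasDerivAt σ (2 * σ z)⁻¹ z := by
    intro z hz
    refine HasDerivAt.of_local_left_inverse (f := fun w => w ^ 2 + p)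
      (hσc.continuousAt (hW.mem_nhds hz)) ?_ (mul_ne_zero two_ne_zero (hσ0 z)) ?_
    · simpa using ((hasDerivAt_id (σ z)).pow 2).add_const p
    · filter_upwards [hW.mem_nhds hz] with w hw
      simp [hσ2 w hw]
  have hσdiff : DifferentiableOn ℂ σ W := fun z hz => (hσd z hz).differentiableAt.differentiableWithinAt
  obtain ⟨z₀, hz₀⟩ := hne
  -- the image contains a ball
  have hopen : σ '' W ∈ 𝓝 (σ z₀) := by
    have hst : HasStrictDerivAt σ (2 * σ z₀)⁻¹ z₀ := by
      have han := (hσdiff.analyticAt (hW.mem_nhds hz₀)).hasStrictDerivAt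
      rwa [(hσd z₀ hz₀).deriv] at han
    have := hst.map_nhds_eq (inv_ne_zero (mul_ne_zero two_ne_zero (hσ0 z₀)))
    rw [← this]
    exact image_mem_map (hW.mem_nhds hz₀)
  obtain ⟨ε, hε, hball⟩ := Metric.mem_nhds_iff.1 hopen
  have hlow : ∀ z ∈ W, ε ≤ ‖σ z + σ z₀‖ := by
    intro z hz
    by_contra hlt
    push Not at hlt
    have : -σ z ∈ ball (σ z₀) ε := by
      rw [mem_ball, dist_eq_norm, ← norm_neg]
      simpa [add_comm] using hlt
    obtain ⟨w, hw, hwe⟩ := hball this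
    have e1 : w - p = z - p := by rw [← hσ2 w hw, ← hσ2 z hz, hwe]; ring
    have e2 : w = z := by simpa using e1
    rw [e2] at hwe
    apply hσ0 z
    have : 2 * σ z = 0 := by linear_combination hwe
    simpa using this
  have hne0 : ∀ z ∈ W, σ z + σ z₀ ≠ 0 := fun z hz h => by
    have := hlow z hz
    rw [h, norm_zero] at this; linarith
  refine ⟨fun z => (σ z + σ z₀)⁻¹, p, σ z₀, ε⁻¹, ?_, ?_, ?_⟩
  · exact (hσdiff.add_const _).inv hne0
  · intro z hz
    rw [norm_inv]
    exact inv_anti₀ hε (hlow z hz)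
  · intro z hz
    rw [← hσ2 z hz]
    have := hne0 z hz
    field_simp
    ring

/-- If the frontier of a bounded open set lies in a simply connected domain, so does the set. -/
lemma rnc_inner {W V : Set ℂ} (hW : IsOpen W) (hsc : SimplyConnectedSpace W)
    (hV : IsOpen V) (hbd : Bornology.IsBounded V) (hfr : frontier V ⊆ W) : V ⊆ W := by
  classical
  intro q hqV
  by_contra hqW
  obtain ⟨L, hLc, hL⟩ := Complex.exists_continuousOn_eqOn_exp_comp (U := W) hsc hW
    (g := fun z => z - q) (by fun_prop) (by
      rintro ⟨z, hz, h⟩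
      exact hqW (by rwa [sub_eq_zero.1 h] at hz))
  obtain ⟨L', hL'⟩ := ContinuousMap.exists_restrict_eq (Y := ℂ) (isClosed_frontier (s := V))
    ⟨(frontier V).domRestrict L, (hLc.mono hfr).domRestrict⟩
  have hL'eq : ∀ z ∈ frontier V, L' z = L z := fun z hz => by
    have := congrArg (fun f => f ⟨z, hz⟩) hL'
    exact this
  set F : ℂ → ℂ := V.piecewise (fun z => Complex.exp (L' z)) (fun z => z - q) with hF
  have hFc : Continuous F := by
    rw [← continuousOn_univ]
    refine ContinuousOn.piecewise ?_ ?_ ?_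
    · rintro z ⟨-, hz⟩
      rw [hL'eq z hz]
      exact hL (hfr hz)
    · exact (Complex.continuous_exp.comp L'.continuous).continuousOn
    · fun_prop
  have hF0 : ∀ z, F z ≠ 0 := by
    intro z
    by_cases hz : z ∈ V
    · simp [hF, hz, Complex.exp_ne_zero]
    · simp only [hF, hz, not_false_eq_true, piecewise_eq_of_notMem]
      intro h
      exact hz (by rw [sub_eq_zero.1 h]; exact hqV)
  have huniv : IsSimplyConnected (univ : Set ℂ) := by
    have : ContractibleSpace (univ : Set ℂ) := convex_univ.contractibleSpace ⟨0, trivial⟩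
    exact SimplyConnectedSpace.ofContractible _
  obtain ⟨Λ, hΛc, hΛ⟩ := Complex.exists_continuousOn_eqOn_exp_comp huniv isOpen_univ
    (g := F) hFc.continuousOn (by rintro ⟨z, -, h⟩; exact hF0 z h)
  rw [continuousOn_univ] at hΛc
  obtain ⟨R, hR, hVR⟩ := hbd.subset_ball_lt 0 q
  set lam : ℝ → ℂ := fun θ => Λ (q + R * Complex.exp (θ * Complex.I)) - θ * Complex.I with hlam
  have hlamc : Continuous lam := by fun_prop
  have hexp : ∀ θ, Complex.exp (lam θ) = R := by
    intro θ
    have hout : q + R * Complex.exp (θ * Complex.I) ∉ V := by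
      intro h
      have := hVR h
      rw [mem_ball, dist_eq_norm] at this
      simp [Complex.norm_exp_ofReal_mul_I, abs_of_pos hR] at this
    rw [hlam]
    simp only
    rw [Complex.exp_sub, show Complex.exp (Λ (q + R * Complex.exp (θ * Complex.I))) = _ from hΛ (mem_univ _)]
    simp only [hF, hout, not_false_eq_true, piecewise_eq_of_notMem]
    rw [add_sub_cancel_left, mul_div_assoc, div_self (Complex.exp_ne_zero _), mul_one]
  have hconst := Complex.isCoveringMap_exp.eq_of_comp_eq hlamc (continuous_const (y := lam 0)) (by
    ext θ
    simp [hexp]) 0 rfl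
  have h2 := congrFun hconst (2 * Real.pi)
  simp [hlam] at h2

section branches
variable {g : ℂ → ℂ} {U' U : Set ℂ} {d : ℕ}

/-- The first `n` iterates of `z` are defined. -/
def rncDom (g : ℂ → ℂ) (U' : Set ℂ) (n : ℕ) (z : ℂ) : Prop := ∀ k < n, g^[k] z ∈ U'

/-- `h` is a branch of `g^{-n}` on `B`. -/
def rncBranch (g : ℂ → ℂ) (U' : Set ℂ) (n : ℕ) (B : Set ℂ) (h : ℂ → ℂ) : Prop :=
  ContinuousOn h B ∧ ∀ y ∈ B, rncDom g U' n (h y) ∧ g^[n] (h y) = y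

lemma rncDom_succ {n : ℕ} {z : ℂ} : rncDom g U' (n + 1) z ↔ z ∈ U' ∧ rncDom g U' n (g z) := by
  constructor
  · intro h
    refine ⟨h 0 (Nat.succ_pos n), fun k hk => ?_⟩
    have := h (k + 1) (by omega)
    rwa [iterate_succ_apply] at this
  · rintro ⟨h0, h⟩ k hk
    cases k with
    | zero => exact h0
    | succ k =>
      rw [iterate_succ_apply]
      exact h k (by omega)

lemma rnc_inv (H : PLSetting g U' U d) {z : ℂ} (hz : z ∈ postCrit g U') : g z ∈ postCrit g U' := by
  have hzU := H.postCrit_subset hz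
  have hc : ContinuousAt g z := H.holo.continuousOn.continuousAt (H.disk'.1.mem_nhds hzU)
  have h1 : MapsTo g (⋃ n : ℕ, g^[n] '' critPts g U') (⋃ n : ℕ, g^[n] '' critPts g U') := by
    intro w hw
    obtain ⟨n, c, hc, rfl⟩ := mem_iUnion.1 hw
    exact mem_iUnion.2 ⟨n + 1, c, hc, iterate_succ_apply' g n c⟩
  exact closure_mono h1.image_subset (hc.continuousWithinAt.mem_closure_image hz)

lemma rnc_inv_iter (H : PLSetting g U' U d) (n : ℕ) {z : ℂ} (hz : z ∈ postCrit g U') :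
    g^[n] z ∈ postCrit g U' := by
  induction n with
  | zero => exact hz
  | succ n ih => rw [iterate_succ_apply']; exact rnc_inv H ih

lemma rnc_crit (H : PLSetting g U' U d) {z : ℂ} (hz : z ∈ U') (h : deriv g z = 0) :
    g z ∈ postCrit g U' :=
  subset_closure (mem_iUnion.2 ⟨1, z, ⟨hz, h⟩, rfl⟩)

lemma rnc_diffAt (H : PLSetting g U' U d) (n : ℕ) {z : ℂ} (hz : rncDom g U' n z) :
    DifferentiableAt ℂ (g^[n]) z := by
  induction n generalizing z with
  | zero => exact differentiableAt_id
  | succ n ih =>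
    rw [rncDom_succ] at hz
    rw [iterate_succ]
    exact (ih hz.2).comp z (H.holo.differentiableAt (H.disk'.1.mem_nhds hz.1))

lemma rnc_deriv_ne (H : PLSetting g U' U d) (n : ℕ) {z : ℂ} (hz : rncDom g U' n z)
    (hP : g^[n] z ∉ postCrit g U') : deriv (g^[n]) z ≠ 0 := by
  induction n generalizing z with
  | zero => simp
  | succ n ih =>
    have hz' := hz
    rw [rncDom_succ] at hz
    rw [iterate_succ_apply] at hP
    rw [iterate_succ]
    rw [deriv_comp z (rnc_diffAt H n hz.2) (H.holo.differentiableAt (H.disk'.1.mem_nhds hz.1))]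
    refine mul_ne_zero (ih hz.2 hP) fun h => hP (rnc_inv_iter H n (rnc_crit H hz.1 h))

lemma rnc_Oopen (H : PLSetting g U' U d) : IsOpen (U \ postCrit g U') :=
  H.disk.1.sdiff isClosed_closure

/-- The restricted map is a covering away from the postcritical set. -/
lemma rnc_cov (H : PLSetting g U' U d) :
    IsCoveringMapOn (fun z : U' => (⟨g z, H.mapsTo z.2⟩ : U)) {w : U | (w : ℂ) ∉ postCrit g U'} := by
  set f : U' → U := fun z => ⟨g z, H.mapsTo z.2⟩ with hf
  have hfc : Continuous f :=
    Continuous.subtype_mk (continuousOn_iff_continuous_domRestrict.1 H.holo.continuousOn) _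
  have hlh : IsLocalHomeomorphOn f (f ⁻¹' {w : U | (w : ℂ) ∉ postCrit g U'}) := by
    have h1 : IsLocalHomeomorphOn g {z | z ∈ U' ∧ g z ∉ postCrit g U'} := by
      rintro z ⟨hzU, hz⟩
      have hd : deriv g z ≠ 0 := fun h => hz (rnc_crit H hzU h)
      have hst : HasStrictDerivAt g (deriv g z) z :=
        (H.holo.analyticAt (H.disk'.1.mem_nhds hzU)).hasStrictDerivAt
      exact ⟨(hst.hasStrictFDerivAt_equiv hd).toOpenPartialHomeomorph g,
        HasStrictFDerivAt.mem_toOpenPartialHomeomorph_source _, rfl⟩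
    have hU' := H.disk'.1.isOpenEmbedding_subtypeVal.isLocalHomeomorph.isLocalHomeomorphOn
      (s := f ⁻¹' {w : U | (w : ℂ) ∉ postCrit g U'})
    have hUU := H.disk.1.isOpenEmbedding_subtypeVal.isLocalHomeomorph.isLocalHomeomorphOn
      (s := f '' (f ⁻¹' {w : U | (w : ℂ) ∉ postCrit g U'}))
    refine IsLocalHomeomorphOn.of_comp_left (g := (Subtype.val : U → ℂ)) ?_ hUU
      fun _ _ => hfc.continuousAt
    exact h1.comp hU' fun z hz => ⟨z.2, hz⟩
  have hprop : IsProperMap f := by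
    rw [isProperMap_iff_isCompact_preimage]
    refine ⟨hfc, fun K hK => ?_⟩
    have h1 := H.proper (Subtype.val '' K) (by rintro _ ⟨w, -, rfl⟩; exact w.2)
      (hK.image continuous_subtype_val)
    rw [Subtype.isCompact_iff]
    convert h1 using 1
    ext z
    constructor
    · rintro ⟨w, hw, rfl⟩
      exact ⟨w.2, f w, hw, rfl⟩
    · rintro ⟨hz, w, hw, hwe⟩
      refine ⟨⟨z, hz⟩, ?_, rfl⟩
      have : f ⟨z, hz⟩ = w := Subtype.ext hwe.symm
      simpa [this] using hw
  refine hprop.isClosedMap.isCoveringMapOn_of_isLocalHomeomorphOn ?_ hlh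
  intro w hw
  refine (hprop.isCompact_preimage isCompact_singleton).finite ?_
  refine IsDiscrete.of_openPartialHomeomorph f subset_rfl fun e he => ?_
  obtain ⟨ψ, h1, h2⟩ := hlh e (by
    change ((f e : U) : ℂ) ∉ postCrit g U'
    rw [show f e = w from he]; exact hw)
  exact ⟨ψ, h1, h2.symm⟩

lemma rnc_lift_step (H : PLSetting g U' U d) {x : ℂ} {r : ℝ} {f : ℂ → ℂ}
    (hf : ContinuousOn f (ball x r)) (hfO : MapsTo f (ball x r) (U \ postCrit g U'))
    {y₀ z₀ : ℂ} (hy₀ : y₀ ∈ ball x r) (hz₀ : z₀ ∈ U') (hg : g z₀ = f y₀) :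
    ∃ F : ℂ → ℂ, ContinuousOn F (ball x r) ∧ F y₀ = z₀ ∧
      ∀ y ∈ ball x r, F y ∈ U' ∧ g (F y) = f y := by
  classical
  have : ContractibleSpace (ball x r) := (convex_ball x r).contractibleSpace ⟨y₀, hy₀⟩
  have : SimplyConnectedSpace (ball x r) := SimplyConnectedSpace.ofContractible _
  have : LocallyPathConnectedSpace (ball x r) := isOpen_ball.locallyPathConnectedSpace
  obtain ⟨F, ⟨hF0, hF⟩, -⟩ := (rnc_cov H).existsUnique_continuousMap_lifts
    (f := ⟨fun y : ball x r => (⟨f y, (hfO y.2).1⟩ : U),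
      Continuous.subtype_mk (continuousOn_iff_continuous_domRestrict.1 hf) _⟩)
    (a₀ := ⟨y₀, hy₀⟩) (e₀ := ⟨z₀, hz₀⟩) (Subtype.ext hg) (fun y => (hfO y.2).2)
  refine ⟨fun y => if hy : y ∈ ball x r then F ⟨y, hy⟩ else 0, ?_, ?_, ?_⟩
  · rw [continuousOn_iff_continuous_domRestrict]
    convert continuous_subtype_val.comp F.continuous using 1
    ext y
    have := y.2
    simp [domRestrict, -mem_ball]
  · simp only [hy₀, dite_true, hF0]
  · intro y hy
    simp only [hy, dite_true]
    refine ⟨(F ⟨y, hy⟩).2, ?_⟩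
    have := congrArg Subtype.val (congrFun hF ⟨y, hy⟩)
    exact this

lemma rnc_exists_branch (H : PLSetting g U' U d) {x : ℂ} {r : ℝ}
    (hB : ball x r ⊆ U \ postCrit g U') {y₀ : ℂ} (hy₀ : y₀ ∈ ball x r) (n : ℕ) :
    ∀ z₀, rncDom g U' n z₀ → g^[n] z₀ = y₀ →
    ∃ h : ℂ → ℂ, rncBranch g U' n (ball x r) h ∧ h y₀ = z₀ := by
  induction n with
  | zero =>
    intro z₀ _ h0
    exact ⟨id, ⟨continuousOn_id, fun y _ => ⟨fun k hk => absurd hk (Nat.not_lt_zero k), rfl⟩⟩, h0.symm⟩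
  | succ n ih =>
    intro z₀ hd h0
    rw [rncDom_succ] at hd
    rw [iterate_succ_apply] at h0
    obtain ⟨h1, hb1, he1⟩ := ih (g z₀) hd.2 h0
    obtain ⟨F, hFc, hF0, hF⟩ := rnc_lift_step H hb1.1 (fun y hy => by
      obtain ⟨hdy, hey⟩ := hb1.2 y hy
      refine ⟨?_, fun hP => (hB hy).2 (by rw [← hey]; exact rnc_inv_iter H n hP)⟩
      cases n with
      | zero => rw [show h1 y = y from hey]; exact (hB hy).1
      | succ n => exact H.subset (hdy 0 (Nat.succ_pos n))) hy₀ hd.1 he1.symm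
    refine ⟨F, ⟨hFc, fun y hy => ?_⟩, hF0⟩
    obtain ⟨hFU, hFg⟩ := hF y hy
    rw [rncDom_succ, iterate_succ_apply, hFg]
    exact ⟨⟨hFU, (hb1.2 y hy).1⟩, (hb1.2 y hy).2⟩

lemma rncBranch.hasDerivAt (H : PLSetting g U' U d) {n : ℕ} {B : Set ℂ} {h : ℂ → ℂ}
    (hB : IsOpen B) (hBO : B ⊆ U \ postCrit g U') (hh : rncBranch g U' n B h) {y : ℂ}
    (hy : y ∈ B) : HasDerivAt h (deriv (g^[n]) (h y))⁻¹ y := by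
  obtain ⟨hd, he⟩ := hh.2 y hy
  refine HasDerivAt.of_local_left_inverse (hh.1.continuousAt (hB.mem_nhds hy))
    (rnc_diffAt H n hd).hasDerivAt (rnc_deriv_ne H n hd (by rw [he]; exact (hBO hy).2)) ?_
  filter_upwards [hB.mem_nhds hy] with w hw using (hh.2 w hw).2

lemma rncBranch.differentiableOn (H : PLSetting g U' U d) {n : ℕ} {B : Set ℂ} {h : ℂ → ℂ}
    (hB : IsOpen B) (hBO : B ⊆ U \ postCrit g U') (hh : rncBranch g U' n B h) :
    DifferentiableOn ℂ h B := fun _ hy =>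
  (hh.hasDerivAt H hB hBO hy).differentiableAt.differentiableWithinAt

lemma rncBranch.mem (n : ℕ) (hn : 1 ≤ n) {B : Set ℂ} {h : ℂ → ℂ}
    (hh : rncBranch g U' n B h) {y : ℂ} (hy : y ∈ B) : h y ∈ U' :=
  (hh.2 y hy).1 0 hn

/-- A branch is a left inverse near a base point, hence on a whole ball. -/
lemma rncBranch.left_inv (H : PLSetting g U' U d) {n : ℕ} {B : Set ℂ} {h : ℂ → ℂ}
    (hB : IsOpen B) (hBO : B ⊆ U \ postCrit g U') (hh : rncBranch g U' n B h) {y : ℂ} {ρ : ℝ}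
    (hρ : 0 < ρ) (hdom : ∀ u ∈ ball y ρ, rncDom g U' n u)
    (hmap : MapsTo (g^[n]) (ball y ρ) B) (hy : h (g^[n] y) = y) :
    ∀ u ∈ ball y ρ, h (g^[n] u) = u := by
  have hgd : DifferentiableOn ℂ (g^[n]) (ball y ρ) := fun u hu =>
    (rnc_diffAt H n (hdom u hu)).differentiableWithinAt
  have hcd : DifferentiableOn ℂ (fun u => h (g^[n] u)) (ball y ρ) :=
    (hh.differentiableOn H hB hBO).comp hgd hmap
  have hyb := mem_ball_self (x := y) hρ
  have hst : HasStrictDerivAt (g^[n]) (deriv (g^[n]) y) y :=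
    (hgd.analyticAt (isOpen_ball.mem_nhds hyb)).hasStrictDerivAt
  have hne := rnc_deriv_ne H n (hdom y hyb) (hBO (hmap hyb)).2
  have hev := hst.eventually_left_inverse hne
  have hcont : Tendsto (fun u => h (g^[n] u)) (𝓝 y) (𝓝 y) := by
    have := (hcd.continuousOn.continuousAt (isOpen_ball.mem_nhds hyb)).tendsto
    rwa [hy] at this
  have heq : (fun u => h (g^[n] u)) =ᶠ[𝓝 y] id := by
    filter_upwards [hev, hcont.eventually hev, isOpen_ball.mem_nhds hyb] with u h1 h2 h3
    rw [(hh.2 _ (hmap h3)).2, h1] at h2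
    exact h2.symm
  exact (hcd.analyticOnNhd isOpen_ball).eqOn_of_preconnected_of_eventuallyEq
    (differentiableOn_id.analyticOnNhd isOpen_ball) (convex_ball y ρ).isPreconnected hyb heq

end branches

section limits
variable {g : ℂ → ℂ} {U' U : Set ℂ} {d : ℕ}

/-- Continuous convergence from locally uniform convergence. -/
lemma rnc_cc {ι : Type*} {l : Filter ι} {f : ι → ℂ → ℂ} {Φ : ℂ → ℂ} {B : Set ℂ} (hB : IsOpen B)
    (hΦ : ContinuousOn Φ B) (h : TendstoLocallyUniformlyOn f Φ l B) {y : ℂ} (hy : y ∈ B) :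
    Tendsto (fun q : ι × ℂ => f q.1 q.2) (l ×ˢ 𝓝 y) (𝓝 (Φ y)) := by
  rw [Metric.tendsto_nhds]
  intro ε hε
  obtain ⟨t, ht, h1⟩ := Metric.tendstoLocallyUniformlyOn_iff.1 h (ε / 2) (by positivity) y hy
  rw [hB.nhdsWithin_eq hy] at ht
  have h2 : ∀ᶠ u in 𝓝 y, dist (Φ u) (Φ y) < ε / 2 :=
    (hΦ.continuousAt (hB.mem_nhds hy)).tendsto.eventually (ball_mem_nhds _ (by positivity))
  filter_upwards [h1.prod_mk (h2.and (show ∀ᶠ u in 𝓝 y, u ∈ t from ht))] with q hq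
  have h3 := hq.1 q.2 hq.2.2
  have h4 := hq.2.1
  calc dist (f q.1 q.2) (Φ y) ≤ dist (f q.1 q.2) (Φ q.2) + dist (Φ q.2) (Φ y) := dist_triangle _ _ _
    _ < ε := by rw [dist_comm (f q.1 q.2)]; linarith

/-- Locally uniform convergence from continuous convergence. -/
lemma rnc_cc_conv {ι : Type*} {l : Filter ι} {f : ι → ℂ → ℂ} {Φ : ℂ → ℂ} {B : Set ℂ}
    (hB : IsOpen B) (hΦ : ContinuousOn Φ B)
    (h : ∀ y ∈ B, Tendsto (fun q : ι × ℂ => f q.1 q.2) (l ×ˢ 𝓝 y) (𝓝 (Φ y))) :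
    TendstoLocallyUniformlyOn f Φ l B := by
  rw [Metric.tendstoLocallyUniformlyOn_iff]
  intro ε hε y hy
  have h1 := (h y hy).eventually (ball_mem_nhds _ (show 0 < ε / 2 by positivity))
  obtain ⟨pa, hpa, pb, hpb, h1⟩ := Filter.eventually_prod_iff.1 h1
  have h2 : ∀ᶠ u in 𝓝 y, dist (Φ u) (Φ y) < ε / 2 :=
    (hΦ.continuousAt (hB.mem_nhds hy)).tendsto.eventually (ball_mem_nhds _ (by positivity))
  refine ⟨{u | pb u ∧ dist (Φ u) (Φ y) < ε / 2}, mem_nhdsWithin_of_mem_nhds (hpb.and h2), ?_⟩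
  filter_upwards [hpa] with i hi u hu
  have h3 : dist (f i u) (Φ y) < ε / 2 := h1 hi hu.1
  have h4 := hu.2
  calc dist (Φ u) (f i u) ≤ dist (Φ u) (Φ y) + dist (f i u) (Φ y) := dist_triangle_right _ _ _
    _ < ε := by linarith

lemma rnc_unif {ι : Type*} {l : Filter ι} {f : ι → ℂ → ℂ} {Φ : ℂ → ℂ} {B K : Set ℂ}
    (hB : IsOpen B) (h : TendstoLocallyUniformlyOn f Φ l B) (hK : IsCompact K) (hKB : K ⊆ B)
    {ε : ℝ} (hε : 0 < ε) : ∀ᶠ i in l, ∀ u ∈ K, dist (Φ u) (f i u) < ε :=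
  Metric.tendstoUniformlyOn_iff.1
    ((tendstoLocallyUniformlyOn_iff_forall_isCompact hB).1 h K hKB hK) ε hε

/-- `g^[m i]` is defined near `u` and converges continuously to the identity at `u`. -/
def rncCC {ι : Type*} (g : ℂ → ℂ) (U' : Set ℂ) (l : Filter ι) (m : ι → ℕ) (u : ℂ) : Prop :=
  (∀ᶠ q in l ×ˢ 𝓝 u, rncDom g U' (m q.1) q.2) ∧
    Tendsto (fun q : ι × ℂ => g^[m q.1] q.2) (l ×ˢ 𝓝 u) (𝓝 u)

/-- The set near which `g^[m i]` converges to the identity. -/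
def rncS {ι : Type*} (g : ℂ → ℂ) (U' : Set ℂ) (l : Filter ι) (m : ι → ℕ) : Set ℂ :=
  {x | ∀ᶠ u in 𝓝 x, rncCC g U' l m u}

lemma rnc_psi {z p a w : ℂ} (h : (z - p) * w ^ 2 = (1 - a * w) ^ 2) :
    w ≠ 0 ∧ z = p + (1 / w - a) ^ 2 := by
  have hw : w ≠ 0 := by
    rintro rfl
    simp at h
  refine ⟨hw, ?_⟩
  have h2 : (z - p) = (1 - a * w) ^ 2 / w ^ 2 := by
    rw [eq_div_iff (pow_ne_zero 2 hw), h]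
  have h3 : (1 / w - a) ^ 2 = (1 - a * w) ^ 2 / w ^ 2 := by
    field_simp
  rw [h3, ← h2]
  ring

lemma rnc_prod_curry {ι : Type*} {l : Filter ι} {y : ℂ} {P : ι → ℂ → Prop}
    (h : ∀ᶠ q in l ×ˢ 𝓝 y, P q.1 q.2) :
    ∃ ρ > 0, ∀ᶠ i in l, ∀ u ∈ ball y ρ, P i u := by
  obtain ⟨pa, hpa, pb, hpb, h1⟩ := Filter.eventually_prod_iff.1 h
  obtain ⟨ρ, hρ, hb⟩ := Metric.eventually_nhds_iff_ball.1 hpb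
  refine ⟨ρ, hρ, ?_⟩
  filter_upwards [hpa] with i hi u hu using h1 hi (hb u hu)

/-- If branches converge to the identity then so do the iterates. -/
lemma rnc_cc_inv (H : PLSetting g U' U d) {ι : Type*} {l : Filter ι} {m : ι → ℕ} {B : Set ℂ}
    (hB : IsOpen B) (hBO : B ⊆ U \ postCrit g U') {h : ι → ℂ → ℂ}
    (hh : ∀ᶠ i in l, rncBranch g U' (m i) B (h i))
    (hlim : TendstoLocallyUniformlyOn h id l B) {x : ℂ} (hx : x ∈ B) : rncCC g U' l m x := by
  have key : ∀ s > 0, closedBall x s ⊆ B → ∀ᶠ q in l ×ˢ 𝓝 x,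
      rncDom g U' (m q.1) q.2 ∧ g^[m q.1] q.2 ∈ closedBall x s := by
    intro s hs hsB
    have h1 := rnc_unif hB hlim (isCompact_closedBall x s) hsB (show 0 < s / 8 by positivity)
    filter_upwards [(hh.and h1).prod_mk (ball_mem_nhds x (show 0 < s / 8 by positivity))] with q hq
    obtain ⟨⟨hbr, hcl⟩, hq2⟩ := hq
    have hdiff := hbr.differentiableOn H hB hBO
    have hxx := hcl x (mem_closedBall_self hs.le)
    have hsub : ball (h q.1 x) (s / 2 / 2) ⊆ h q.1 '' closedBall x s := by
      refine DiffContOnCl.ball_subset_image_closedBall ?_ hs ?_ ?_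
      · refine (hdiff.mono ?_).diffContOnCl
        exact closure_ball_subset_closedBall.trans hsB
      · intro z hz
        have hz1 := hcl z (sphere_subset_closedBall hz)
        have hz2 : dist z x = s := hz
        simp only [id] at hz1 hxx
        have h3 := dist_triangle4 z (h q.1 z) (h q.1 x) x
        rw [dist_comm (h q.1 x) x, hz2] at h3
        rw [← dist_eq_norm]
        linarith
      · refine Eventually.frequently (f := 𝓝[≠] x) ?_ |>.filter_mono nhdsWithin_le_nhds
        filter_upwards [self_mem_nhdsWithin, mem_nhdsWithin_of_mem_nhds (hB.mem_nhds hx)]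
          with z hz hzB heq
        refine hz ?_
        rw [mem_singleton_iff, ← (hbr.2 z hzB).2, heq, (hbr.2 x hx).2]
    have hq3 : q.2 ∈ ball (h q.1 x) (s / 2 / 2) := by
      simp only [id] at hxx
      rw [mem_ball]
      have := dist_triangle q.2 x (h q.1 x)
      linarith
    obtain ⟨u, hu, hue⟩ := hsub hq3
    obtain ⟨hd, he⟩ := hbr.2 u (hsB hu)
    rw [hue] at hd he
    exact ⟨hd, by rw [he]; exact hu⟩
  obtain ⟨s₀, hs₀, hs₀B⟩ := nhds_basis_closedBall.mem_iff.1 (hB.mem_nhds hx)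
  refine ⟨(key s₀ hs₀ hs₀B).mono fun q hq => hq.1, ?_⟩
  rw [Metric.tendsto_nhds]
  intro ε hε
  have hmin : 0 < min s₀ (ε / 2) := by positivity
  filter_upwards [key _ hmin ((closedBall_subset_closedBall (min_le_left _ _)).trans hs₀B)] with q hq
  have := hq.2
  rw [mem_closedBall] at this
  have h2 := min_le_right s₀ (ε / 2)
  linarith

lemma rnc_ne_univ (H : PLSetting g U' U d) : U' ≠ univ := by
  intro h
  exact H.ne (subset_antisymm H.subset (by rw [h]; exact subset_univ _))

/-- The set `rncS` spreads. -/
lemma rnc_S_spread (H : PLSetting g U' U d) {ι : Type*} (𝒱 : Ultrafilter ι) {m : ι → ℕ}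
    (hm : ∀ᶠ i in (𝒱 : Filter ι), 1 ≤ m i) (x : ℂ) (r : ℝ)
    (hB : ball x r ⊆ U \ postCrit g U')
    (hne : (rncS g U' (𝒱 : Filter ι) m ∩ ball x r).Nonempty) :
    ball x r ⊆ rncS g U' (𝒱 : Filter ι) m := by
  obtain ⟨φ, p, a, M, hφd, hφM, hφ⟩ := rnc_phi H.disk'.1 H.disk'.2.2 H.disk'.2.1.nonempty
    (rnc_ne_univ H)
  obtain ⟨y, hyS, hyB⟩ := hne
  obtain ⟨ρ₁, hρ₁, hcc⟩ := Metric.eventually_nhds_iff_ball.1 hyS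
  have hccy := hcc y (mem_ball_self hρ₁)
  obtain ⟨ρ₂, hρ₂, hev⟩ := rnc_prod_curry
    (P := fun i u => rncDom g U' (m i) u ∧ g^[m i] u ∈ ball x r)
    (hccy.1.and (hccy.2.eventually (isOpen_ball.mem_nhds hyB)))
  set ρ := min ρ₁ ρ₂ with hρdef
  have hρ : 0 < ρ := lt_min hρ₁ hρ₂
  have hex : ∀ i, ∃ h : ℂ → ℂ, (∀ u ∈ ball y ρ₂, rncDom g U' (m i) u ∧ g^[m i] u ∈ ball x r) →
      rncBranch g U' (m i) (ball x r) h ∧ ∀ u ∈ ball y ρ, h (g^[m i] u) = u := by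
    intro i
    by_cases hi : ∀ u ∈ ball y ρ₂, rncDom g U' (m i) u ∧ g^[m i] u ∈ ball x r
    · obtain ⟨h, hb, he⟩ := rnc_exists_branch H hB (hi y (mem_ball_self hρ₂)).2 (m i) y
        (hi y (mem_ball_self hρ₂)).1 rfl
      have hsub : ball y ρ ⊆ ball y ρ₂ := ball_subset_ball (min_le_right _ _)
      exact ⟨h, fun _ => ⟨hb, hb.left_inv H isOpen_ball hB hρ (fun u hu => (hi u (hsub hu)).1)
        (fun u hu => (hi u (hsub hu)).2) he⟩⟩
    · exact ⟨id, fun h => absurd h hi⟩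
  choose h hh using hex
  have hbr : ∀ᶠ i in (𝒱 : Filter ι), 1 ≤ m i ∧ rncBranch g U' (m i) (ball x r) (h i) ∧
      ∀ u ∈ ball y ρ, h i (g^[m i] u) = u ∧ u ∈ U' := by
    filter_upwards [hev, hm] with i hi hmi
    refine ⟨hmi, (hh i hi).1, fun u hu => ⟨(hh i hi).2 u hu, ?_⟩⟩
    exact (hi u (ball_subset_ball (min_le_right _ _) hu)).1 0 hmi
  obtain ⟨Φ, hΦd, hΦ⟩ := rnc_montel 𝒱 (fun i u => φ (h i u)) (x := x) (r := r) (M := M) (by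
    filter_upwards [hbr] with i hi
    exact ⟨hφd.comp (hi.2.1.differentiableOn H isOpen_ball hB) fun u hu => hi.2.1.mem _ hi.1 hu,
      fun u hu => hφM _ (hi.2.1.mem _ hi.1 hu)⟩)
  have hΦcc := fun {u : ℂ} (hu : u ∈ ball x r) => rnc_cc isOpen_ball hΦd.continuousOn hΦ hu
  have hrel0 : ∀ᶠ u in 𝓝 y, (u - p) * Φ u ^ 2 = (1 - a * Φ u) ^ 2 := by
    filter_upwards [ball_mem_nhds y hρ, isOpen_ball.mem_nhds hyB] with u hu huB
    have h1 : Tendsto (fun i => (i, g^[m i] u)) (𝒱 : Filter ι) ((𝒱 : Filter ι) ×ˢ 𝓝 u) := by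
      refine tendsto_id.prodMk ?_
      have h2 : Tendsto (fun i => (i, u)) (𝒱 : Filter ι) ((𝒱 : Filter ι) ×ˢ 𝓝 u) :=
        tendsto_id.prodMk tendsto_const_nhds
      exact (hcc u (ball_subset_ball (min_le_left _ _) hu)).2.comp h2
    have h3 := (hΦcc huB).comp h1
    have h4 : Tendsto (fun _ : ι => φ u) (𝒱 : Filter ι) (𝓝 (Φ u)) := by
      refine h3.congr' ?_
      filter_upwards [hbr] with i hi
      simp only [comp_apply, (hi.2.2 u hu).1]
    have h5 : φ u = Φ u := tendsto_nhds_unique tendsto_const_nhds h4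
    obtain ⟨i, hi⟩ := hbr.exists
    rw [← h5]
    exact hφ u (hi.2.2 u hu).2
  have hrel : EqOn (fun u => (u - p) * Φ u ^ 2) (fun u => (1 - a * Φ u) ^ 2) (ball x r) := by
    refine AnalyticOnNhd.eqOn_of_preconnected_of_eventuallyEq (DifferentiableOn.analyticOnNhd ?_ isOpen_ball)
      (DifferentiableOn.analyticOnNhd ?_ isOpen_ball) (convex_ball x r).isPreconnected hyB hrel0
    · fun_prop
    · fun_prop
  have hlim : TendstoLocallyUniformlyOn h id (𝒱 : Filter ι) (ball x r) := by
    refine rnc_cc_conv isOpen_ball continuousOn_id fun u hu => ?_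
    obtain ⟨hne, hue⟩ := rnc_psi (hrel hu)
    have h1 : Tendsto (fun q : ι × ℂ => p + (1 / φ (h q.1 q.2) - a) ^ 2) ((𝒱 : Filter ι) ×ˢ 𝓝 u)
        (𝓝 (p + (1 / Φ u - a) ^ 2)) :=
      (((tendsto_const_nhds.div (hΦcc hu) hne).sub_const a).pow 2).const_add p
    rw [← hue] at h1
    refine h1.congr' ?_
    filter_upwards [hbr.prod_mk (isOpen_ball.mem_nhds hu)] with q hq
    exact (rnc_psi (hφ _ (hq.1.2.1.mem _ hq.1.1 hq.2))).2.symm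
  have hall : ∀ u ∈ ball x r, rncCC g U' (𝒱 : Filter ι) m u := fun u hu =>
    rnc_cc_inv H isOpen_ball hB (hbr.mono fun i hi => hi.2.1) hlim hu
  intro u hu
  filter_upwards [isOpen_ball.mem_nhds hu] with v hv using hall v hv

end limits

section shrink
variable {g : ℂ → ℂ} {U' U : Set ℂ} {d : ℕ}

lemma rnc_S_isOpen {ι : Type*} (l : Filter ι) (m : ι → ℕ) : IsOpen (rncS g U' l m) := by
  rw [isOpen_iff_mem_nhds]
  intro x hx
  exact eventually_eventually_nhds.2 hx

lemma rnc_S_sub {ι : Type*} {l : Filter ι} [l.NeBot] {m : ι → ℕ} (hm : ∀ᶠ i in l, 1 ≤ m i)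
    {x : ℂ} (hx : x ∈ rncS g U' l m) : x ∈ U' := by
  have hcc : rncCC g U' l m x := Eventually.self_of_nhds hx
  obtain ⟨ρ, hρ, h⟩ := rnc_prod_curry (P := fun i u => rncDom g U' (m i) u) hcc.1
  obtain ⟨i, hi, h1⟩ := (h.and hm).exists
  exact hi x (mem_ball_self hρ) 0 h1

lemma rnc_jordan {Γ : Set ℂ} (h : IsJordanCurve Γ) : IsPreconnected Γ ∧ IsCompact Γ := by
  obtain ⟨f, hf, -, rfl⟩ := h
  have : PreconnectedSpace (Metric.sphere (0 : ℂ) 1) :=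
    isPreconnected_iff_preconnectedSpace.1
      (isPreconnected_sphere (by rw [Complex.rank_real_complex]; norm_num) 0 1)
  exact ⟨isPreconnected_range hf, isCompact_range hf⟩

lemma rnc_no_id (H : PLSetting g U' U d) {V₀ : Set ℂ}
    (hV₀ : IsTopDisk V₀) (hV₀bd : Bornology.IsBounded V₀)
    (hΓ₀ : IsJordanCurve (frontier V₀))
    (hPV₀ : postCrit g U' ⊆ V₀) (hV₀U : closure V₀ ⊆ U)
    {ι : Type*} (𝒱 : Ultrafilter ι) {m : ι → ℕ} (hm : ∀ᶠ i in (𝒱 : Filter ι), 1 ≤ m i)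
    {x₀ y : ℂ} {r : ℝ} (hx₀ : x₀ ∈ frontier V₀) (hB : ball x₀ r ⊆ U \ postCrit g U')
    (hy : y ∈ ball x₀ r) : y ∉ rncS g U' (𝒱 : Filter ι) m := by
  intro hyS
  have hsp := rnc_S_spread H 𝒱 hm
  have hx₀S := hsp x₀ r hB ⟨y, hyS, hy⟩ (mem_ball_self (pos_of_mem_ball hy))
  have hΓO : frontier V₀ ⊆ U \ postCrit g U' := fun z hz =>
    ⟨hV₀U hz.1, fun hP => hz.2 (by rw [hV₀.1.interior_eq]; exact hPV₀ hP)⟩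
  have hΓS : frontier V₀ ⊆ rncS g U' (𝒱 : Filter ι) m :=
    rnc_spread (rnc_Oopen H) (fun x r _ h1 h2 => hsp x r h1 h2) (rnc_jordan hΓ₀).1 hΓO
      ⟨x₀, hx₀, hx₀S⟩
  have hSU : rncS g U' (𝒱 : Filter ι) m ⊆ U' := fun z hz => rnc_S_sub hm hz
  have hVU' := rnc_inner H.disk'.1 H.disk'.2.2 hV₀.1 hV₀bd (hΓS.trans hSU)
  have hUsub : U ⊆ V₀ ∪ rncS g U' (𝒱 : Filter ι) m := by
    refine H.disk.2.1.isPreconnected.subset_of_closure_inter_subset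
      (hV₀.1.union (rnc_S_isOpen _ _)) ⟨x₀, (hΓO hx₀).1, Or.inr hx₀S⟩ ?_
    rintro x ⟨hxc, hxU⟩
    by_contra hx
    rw [mem_union, not_or] at hx
    have hxcl : x ∉ closure V₀ := by
      intro hc
      exact hx.2 (hΓS ⟨hc, by rw [hV₀.1.interior_eq]; exact hx.1⟩)
    have hxO : x ∈ (U \ postCrit g U') ∩ (closure V₀)ᶜ :=
      ⟨⟨hxU, fun hP => hx.1 (hPV₀ hP)⟩, hxcl⟩
    obtain ⟨ρ, hρ, hb⟩ := Metric.isOpen_iff.1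
      ((rnc_Oopen H).inter isClosed_closure.isOpen_compl) x hxO
    obtain ⟨v, hv, hvm⟩ := mem_closure_iff.1 hxc (ball x ρ) isOpen_ball (mem_ball_self hρ)
    rcases hvm with hvV | hvS
    · exact (hb hv).2 (subset_closure hvV)
    · exact hx.2 (hsp x ρ (fun z hz => (hb hz).1) ⟨v, hvS, hv⟩ (mem_ball_self hρ))
  exact H.ne (subset_antisymm H.subset (hUsub.trans (union_subset hVU' hSU)))

/-- Branches of `g^{-n}` shrink to points. -/
lemma rnc_shrink (H : PLSetting g U' U d) (𝒰 : Ultrafilter ℕ) (h𝒰 : (𝒰 : Filter ℕ) ≤ atTop)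
    {x y z : ℂ} {r : ℝ} (hB : ball x r ⊆ U \ postCrit g U') (hy : y ∈ ball x r)
    (hns : ∀ m : ℕ → ℕ, (∀ j, 1 ≤ m j) → y ∉ rncS g U' (hyperfilter ℕ : Filter ℕ) m)
    {h : ℕ → ℂ → ℂ} (hh : ∀ᶠ n in (𝒰 : Filter ℕ), rncBranch g U' n (ball x r) (h n))
    {y' : ℕ → ℂ} (hy' : Tendsto y' 𝒰 (𝓝 y)) (hz : Tendsto (fun n => h n (y' n)) 𝒰 (𝓝 z)) :
    TendstoLocallyUniformlyOn h (fun _ => z) (𝒰 : Filter ℕ) (ball x r) := by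
  obtain ⟨φ, p, a, M, hφd, hφM, hφ⟩ := rnc_phi H.disk'.1 H.disk'.2.2 H.disk'.2.1.nonempty
    (rnc_ne_univ H)
  have hbr : ∀ᶠ n in (𝒰 : Filter ℕ), 1 ≤ n ∧ rncBranch g U' n (ball x r) (h n) :=
    ((eventually_ge_atTop 1).filter_mono h𝒰).and hh
  have hrel : ∀ {n : ℕ}, 1 ≤ n ∧ rncBranch g U' n (ball x r) (h n) → ∀ {u : ℂ}, u ∈ ball x r →
      (h n u - p) * φ (h n u) ^ 2 = (1 - a * φ (h n u)) ^ 2 := fun hn _ hu =>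
    hφ _ (hn.2.mem _ hn.1 hu)
  obtain ⟨Φ, hΦd, hΦ⟩ := rnc_montel 𝒰 (fun n u => φ (h n u)) (x := x) (r := r) (M := M) (by
    filter_upwards [hbr] with i hi
    exact ⟨hφd.comp (hi.2.differentiableOn H isOpen_ball hB) fun u hu => hi.2.mem _ hi.1 hu,
      fun u hu => hφM _ (hi.2.mem _ hi.1 hu)⟩)
  have hΦcc := fun {u : ℂ} (hu : u ∈ ball x r) => rnc_cc isOpen_ball hΦd.continuousOn hΦ hu
  set c := Φ y with hc
  have hcy : Tendsto (fun n => φ (h n (y' n))) 𝒰 (𝓝 c) :=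
    (hΦcc hy).comp (tendsto_id.prodMk hy')
  have hcrel : (z - p) * c ^ 2 = (1 - a * c) ^ 2 := by
    refine tendsto_nhds_unique ((hz.sub_const p).mul (hcy.pow 2)) ?_
    refine ((tendsto_const_nhds.sub (hcy.const_mul a)).pow 2).congr' ?_
    filter_upwards [hbr, hy'.eventually (isOpen_ball.mem_nhds hy)] with n hn hny
    exact (hrel hn hny).symm
  obtain ⟨hc0, hzc⟩ := rnc_psi hcrel
  have han : AnalyticAt ℂ Φ y := hΦd.analyticAt (isOpen_ball.mem_nhds hy)
  rcases han.eventually_eq_or_eventually_ne (analyticAt_const (v := c)) with hconst | hne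
  · have hall : EqOn Φ (fun _ => c) (ball x r) :=
      (hΦd.analyticOnNhd isOpen_ball).eqOn_of_preconnected_of_eventuallyEq
        analyticOnNhd_const (convex_ball x r).isPreconnected hy hconst
    refine rnc_cc_conv isOpen_ball continuousOn_const fun u hu => ?_
    have h0 := hΦcc hu
    rw [hall hu] at h0
    have h1 : Tendsto (fun q : ℕ × ℂ => p + (1 / φ (h q.1 q.2) - a) ^ 2) ((𝒰 : Filter ℕ) ×ˢ 𝓝 u)
        (𝓝 (p + (1 / c - a) ^ 2)) :=
      (((tendsto_const_nhds.div h0 hc0).sub_const a).pow 2).const_add p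
    rw [← hzc] at h1
    refine h1.congr' ?_
    filter_upwards [hbr.prod_mk (isOpen_ball.mem_nhds hu)] with q hq
    exact (rnc_psi (hrel hq.1 hq.2)).2.symm
  exfalso
  -- choose a sphere on which `Φ` avoids `c`
  obtain ⟨s, hs, hsB, hsne⟩ : ∃ s > 0, closedBall y s ⊆ ball x r ∧ ∀ u ∈ sphere y s, Φ u ≠ c := by
    rw [eventually_nhdsWithin_iff] at hne
    obtain ⟨s, hs, hsub⟩ := nhds_basis_closedBall.mem_iff.1
      (inter_mem hne (isOpen_ball.mem_nhds hy))
    refine ⟨s, hs, fun u hu => (hsub hu).2, fun u hu => (hsub (sphere_subset_closedBall hu)).1 ?_⟩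
    exact ne_of_mem_sphere hu hs.ne'
  obtain ⟨ε, hε, hεs⟩ : ∃ ε > 0, ∀ u ∈ sphere y s, 4 * ε ≤ ‖Φ u - c‖ := by
    have hcont : ContinuousOn (fun u => ‖Φ u - c‖) (sphere y s) :=
      ((hΦd.continuousOn.mono (sphere_subset_closedBall.trans hsB)).sub continuousOn_const).norm
    obtain ⟨u₀, hu₀, hmin⟩ := (isCompact_sphere y s).exists_isMinOn
      (NormedSpace.sphere_nonempty.2 hs.le) hcont
    refine ⟨‖Φ u₀ - c‖ / 4, div_pos (norm_pos_iff.2 (sub_ne_zero.2 (hsne u₀ hu₀))) (by norm_num),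
      fun u hu => ?_⟩
    have := hmin hu
    simp only [mem_ofPred_eq] at this
    linarith
  have hyc : y ∈ closedBall y s := mem_closedBall_self hs.le
  have hunif := fun {η : ℝ} (hη : 0 < η) =>
    rnc_unif isOpen_ball hΦ (isCompact_closedBall y s) hsB hη
  -- images contain a fixed ball
  have himg : ∀ᶠ n in (𝒰 : Filter ℕ), ball c (ε / 2) ⊆ (fun u => φ (h n u)) '' closedBall y s := by
    filter_upwards [hbr, hunif (show 0 < ε / 2 by positivity)] with n hn hcl
    have hd : DifferentiableOn ℂ (fun u => φ (h n u)) (ball x r) :=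
      hφd.comp (hn.2.differentiableOn H isOpen_ball hB) fun u hu => hn.2.mem _ hn.1 hu
    have hyy := hcl y hyc
    have hsub : ball (φ (h n y)) (2 * ε / 2) ⊆ (fun u => φ (h n u)) '' closedBall y s := by
      refine DiffContOnCl.ball_subset_image_closedBall (f := fun u => φ (h n u)) ?_ hs ?_ ?_
      · exact (hd.mono (closure_ball_subset_closedBall.trans hsB)).diffContOnCl
      · intro w hw
        have h1 := hcl w (sphere_subset_closedBall hw)
        have h2 := hεs w hw
        have h3 := dist_triangle4 (Φ w) (φ (h n w)) (φ (h n y)) c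
        rw [dist_comm (φ (h n y)) c] at h3
        rw [← dist_eq_norm] at h2 ⊢
        linarith
      · refine Eventually.frequently (f := 𝓝[≠] y) ?_ |>.filter_mono nhdsWithin_le_nhds
        filter_upwards [self_mem_nhdsWithin, mem_nhdsWithin_of_mem_nhds (isOpen_ball.mem_nhds hy)]
          with w hw hwB heq
        refine hw ?_
        have h1 := (rnc_psi (hrel hn hwB)).2
        have heq' : φ (h n w) = φ (h n y) := heq
        rw [heq', ← (rnc_psi (hrel hn hy)).2] at h1
        rw [mem_singleton_iff, ← (hn.2.2 w hwB).2, h1, (hn.2.2 y hy).2]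
    refine Subset.trans ?_ hsub
    refine ball_subset_ball' ?_
    linarith
  -- the inverse maps
  set ψ : ℂ → ℂ := fun w => p + (1 / w - a) ^ 2 with hψ
  set C : ℝ := (‖y‖ + s) / (ε / 4) with hC
  have hC0 : 0 ≤ C := by positivity
  have hG : ∀ {n : ℕ}, (1 ≤ n ∧ rncBranch g U' n (ball x r) (h n)) →
      ball c (ε / 2) ⊆ (fun u => φ (h n u)) '' closedBall y s →
      (∀ w ∈ ball c (ε / 2), rncDom g U' n (ψ w)) ∧
      ∀ u ∈ ball c (ε / 4), ∀ v ∈ ball c (ε / 4), ‖g^[n] (ψ u) - g^[n] (ψ v)‖ ≤ C * ‖u - v‖ := by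
    intro n hn hi
    have hpt : ∀ w ∈ ball c (ε / 2), w ≠ 0 ∧ rncDom g U' n (ψ w) ∧
        g^[n] (ψ w) ∈ closedBall y s := by
      intro w hw
      obtain ⟨u, hu, rfl⟩ := hi hw
      obtain ⟨h1, h2⟩ := rnc_psi (hrel hn (hsB hu))
      have h3 : ψ (φ (h n u)) = h n u := h2.symm
      obtain ⟨h4, h5⟩ := hn.2.2 u (hsB hu)
      refine ⟨h1, ?_, ?_⟩
      · simp only [h3]; exact h4
      · simp only [h3, h5]; exact hu
    refine ⟨fun w hw => (hpt w hw).2.1, fun u hu v hv => ?_⟩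
    refine rnc_lip (f := fun w => g^[n] (ψ w)) (by positivity) ?_ ?_ hu hv
    · intro w hw
      obtain ⟨h1, h2, -⟩ := hpt w (by convert hw using 2; ring)
      have hψd : DifferentiableAt ℂ ψ w :=
        ((((differentiableAt_const _).div differentiableAt_id h1).sub_const a).pow 2).const_add p
      exact ((rnc_diffAt H n h2).comp w hψd).differentiableWithinAt
    · intro w hw
      obtain ⟨-, -, h2⟩ := hpt w (by convert hw using 2; ring)
      rw [mem_closedBall, dist_eq_norm] at h2
      have := norm_sub_norm_le (g^[n] (ψ w)) y
      linarith
  -- a uniform neighbourhood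
  obtain ⟨ρ, hρ, hρs, hρc⟩ : ∃ ρ > 0, ball y ρ ⊆ closedBall y s ∧
      ∀ u ∈ ball y ρ, dist (Φ u) c < ε / 8 := by
    have h1 := (hΦd.continuousOn.continuousAt (isOpen_ball.mem_nhds hy)).tendsto.eventually
      (ball_mem_nhds c (show 0 < ε / 8 by positivity))
    obtain ⟨ρ, hρ, hb⟩ := Metric.eventually_nhds_iff_ball.1 (h1.and (closedBall_mem_nhds y hs))
    exact ⟨ρ, hρ, fun u hu => (hb u hu).2, fun u hu => (hb u hu).1⟩
  have hmain : ∀ η > 0, ∃ m : ℕ, 1 ≤ m ∧ ∀ u ∈ ball y ρ, rncDom g U' m u ∧ dist (g^[m] u) u ≤ η := by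
    intro η hη
    set η' : ℝ := min (ε / 8) (η / (2 * (C + 1))) with hη'
    have hη'0 : 0 < η' := by positivity
    have hN := hbr.and (himg.and (hunif hη'0))
    obtain ⟨k, hkbr, hki, hkc⟩ := hN.exists
    obtain ⟨l, ⟨hlbr, hli, hlc⟩, hkl⟩ := (hN.and ((eventually_gt_atTop k).filter_mono h𝒰)).exists
    refine ⟨l - k, by omega, fun u hu => ?_⟩
    have huc := hρs hu
    have huB := hsB huc
    have hin : ∀ {w : ℂ}, dist (Φ u) w < η' → w ∈ ball c (ε / 4) := by
      intro w hw
      have h1 := hρc u hu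
      have h2 := dist_triangle_left w c (Φ u)
      have h3 := min_le_left (ε / 8) (η / (2 * (C + 1)))
      rw [mem_ball]
      linarith
    have hk1 := hin (hkc u huc)
    have hl1 := hin (hlc u huc)
    have hψk : ψ (φ (h k u)) = h k u := (rnc_psi (hrel hkbr huB)).2.symm
    have hψl : ψ (φ (h l u)) = h l u := (rnc_psi (hrel hlbr huB)).2.symm
    obtain ⟨hdom, hlip⟩ := hG hlbr hli
    have hd := hdom _ (ball_subset_ball (by linarith) hk1)
    have hL := hlip _ hk1 _ hl1
    rw [hψk] at hd
    rw [hψk, hψl, (hlbr.2.2 u huB).2] at hL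
    have hgk := (hkbr.2.2 u huB).2
    have hlk : g^[l] (h k u) = g^[l - k] u := by
      conv_lhs => rw [show l = (l - k) + k by omega]
      rw [iterate_add_apply, hgk]
    refine ⟨fun j hj => ?_, ?_⟩
    · have := hd (j + k) (by omega)
      rwa [iterate_add_apply, hgk] at this
    · rw [hlk, ← dist_eq_norm, ← dist_eq_norm] at hL
      have h2 : dist (φ (h k u)) (φ (h l u)) ≤ 2 * η' := by
        have := dist_triangle_left (φ (h k u)) (φ (h l u)) (Φ u)
        have h3 := hkc u huc
        have h4 := hlc u huc
        linarith
      have h3 : η' * (2 * (C + 1)) ≤ η := by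
        rw [← le_div_iff₀ (by positivity)]
        exact min_le_right _ _
      nlinarith [mul_le_mul_of_nonneg_left h2 hC0]
  have hmj : ∀ j : ℕ, ∃ m : ℕ, 1 ≤ m ∧ ∀ u ∈ ball y ρ, rncDom g U' m u ∧
      dist (g^[m] u) u ≤ 1 / ((j : ℝ) + 1) := fun j => hmain _ (by positivity)
  choose m hm1 hm2 using hmj
  refine hns m hm1 ?_
  change ∀ᶠ u in 𝓝 y, _
  filter_upwards [ball_mem_nhds y hρ] with u hu
  have hu' : ∀ᶠ q in (hyperfilter ℕ : Filter ℕ) ×ˢ 𝓝 u, q.2 ∈ ball y ρ :=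
    tendsto_snd.eventually (isOpen_ball.mem_nhds hu)
  refine ⟨hu'.mono fun q hq => (hm2 q.1 q.2 hq).1, ?_⟩
  have hlim : Tendsto (fun q : ℕ × ℂ => 1 / ((q.1 : ℝ) + 1) + dist q.2 u)
      ((hyperfilter ℕ : Filter ℕ) ×ˢ 𝓝 u) (𝓝 (0 + dist u u)) := by
    refine Tendsto.add ?_ ?_
    · exact (tendsto_one_div_add_atTop_nhds_zero_nat.mono_left
        (Nat.hyperfilter_le_atTop)).comp tendsto_fst
    · exact (tendsto_snd (f := (hyperfilter ℕ : Filter ℕ)) (g := 𝓝 u)).dist tendsto_const_nhds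
  rw [dist_self, add_zero] at hlim
  rw [tendsto_iff_dist_tendsto_zero]
  refine squeeze_zero' (Eventually.of_forall fun _ => dist_nonneg) ?_ hlim
  filter_upwards [hu'] with q hq
  have h1 := (hm2 q.1 q.2 hq).2
  have h2 := dist_triangle (g^[m q.1] q.2) q.2 u
  linarith

end shrink

section final
variable {g : ℂ → ℂ} {U' U : Set ℂ} {d : ℕ}

lemma rnc_preIter_succ (V : Set ℂ) (n : ℕ) :
    preIter g U' V (n + 1) = U' ∩ g ⁻¹' preIter g U' V n := by
  ext z
  have := rncDom_succ (g := g) (U' := U') (n := n) (z := z)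
  constructor
  · rintro ⟨h1, h2⟩
    rw [iterate_succ_apply] at h2
    exact ⟨(this.1 h1).1, (this.1 h1).2, h2⟩
  · rintro ⟨h1, h2, h3⟩
    exact ⟨this.2 ⟨h1, h2⟩, by rw [iterate_succ_apply]; exact h3⟩

lemma rnc_preIter_open (H : PLSetting g U' U d) {V : Set ℂ} (hV : IsOpen V) (n : ℕ) :
    IsOpen (preIter g U' V n) := by
  induction n with
  | zero =>
    convert hV using 1
    ext z
    simp [preIter]
  | succ n ih =>
    rw [rnc_preIter_succ]
    exact H.holo.continuousOn.isOpen_inter_preimage H.disk'.1 ih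

lemma rnc_preIter_compact (H : PLSetting g U' U d) {C : Set ℂ} (hC : IsCompact C) (hCU : C ⊆ U)
    (n : ℕ) : IsCompact (preIter g U' C n) ∧ preIter g U' C n ⊆ U := by
  induction n with
  | zero =>
    have : preIter g U' C 0 = C := by
      ext z
      simp [preIter]
    rw [this]
    exact ⟨hC, hCU⟩
  | succ n ih =>
    rw [rnc_preIter_succ]
    exact ⟨H.proper _ ih.2 ih.1, inter_subset_left.trans H.subset⟩

lemma rnc_preIter_frontier (H : PLSetting g U' U d) {V₀ : Set ℂ} (hV₀ : IsOpen V₀)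
    (hV₀bd : Bornology.IsBounded V₀) (hV₀U : closure V₀ ⊆ U) {n : ℕ} {z : ℂ}
    (hz : z ∈ frontier (preIter g U' V₀ n)) : rncDom g U' n z ∧ g^[n] z ∈ frontier V₀ := by
  have hcpt := (rnc_preIter_compact H hV₀bd.isCompact_closure hV₀U n).1
  have h1 : z ∈ preIter g U' (closure V₀) n :=
    closure_minimal (show preIter g U' V₀ n ⊆ preIter g U' (closure V₀) n from
      fun w hw => ⟨hw.1, subset_closure hw.2⟩) hcpt.isClosed hz.1
  have h2 : z ∉ preIter g U' V₀ n := by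
    have := hz.2
    rwa [(rnc_preIter_open H hV₀ n).interior_eq] at this
  refine ⟨h1.1, h1.2, fun h3 => h2 ⟨h1.1, ?_⟩⟩
  rwa [hV₀.interior_eq] at h3

/-- Points that are limits of images of points converging to `z`. -/
def rncT (g : ℂ → ℂ) (U' : Set ℂ) (𝒰 : Ultrafilter ℕ) (z : ℂ) : Set ℂ :=
  {x | ∃ y' z' : ℕ → ℂ, Tendsto y' 𝒰 (𝓝 x) ∧ Tendsto z' 𝒰 (𝓝 z) ∧
    ∀ᶠ n in (𝒰 : Filter ℕ), rncDom g U' n (z' n) ∧ g^[n] (z' n) = y' n}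

lemma rnc_T_conv (H : PLSetting g U' U d) (𝒰 : Ultrafilter ℕ) (h𝒰 : (𝒰 : Filter ℕ) ≤ atTop)
    {x y z : ℂ} {r : ℝ} (hB : ball x r ⊆ U \ postCrit g U') (hy : y ∈ ball x r)
    (hns : ∀ m : ℕ → ℕ, (∀ j, 1 ≤ m j) → y ∉ rncS g U' (hyperfilter ℕ : Filter ℕ) m)
    (hyT : y ∈ rncT g U' 𝒰 z) :
    ∃ h : ℕ → ℂ → ℂ, (∀ᶠ n in (𝒰 : Filter ℕ), rncBranch g U' n (ball x r) (h n)) ∧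
      TendstoLocallyUniformlyOn h (fun _ => z) (𝒰 : Filter ℕ) (ball x r) := by
  obtain ⟨y', z', hy', hz', hev⟩ := hyT
  have hex : ∀ n, ∃ h : ℂ → ℂ, (rncDom g U' n (z' n) ∧ g^[n] (z' n) = y' n) ∧ y' n ∈ ball x r →
      rncBranch g U' n (ball x r) h ∧ h (y' n) = z' n := by
    intro n
    by_cases hn : (rncDom g U' n (z' n) ∧ g^[n] (z' n) = y' n) ∧ y' n ∈ ball x r
    · obtain ⟨h, hb, he⟩ := rnc_exists_branch H hB hn.2 n (z' n) hn.1.1 hn.1.2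
      exact ⟨h, fun _ => ⟨hb, he⟩⟩
    · exact ⟨id, fun h => absurd h hn⟩
  choose h hh using hex
  have hev2 := hev.and (hy'.eventually (isOpen_ball.mem_nhds hy))
  have hbr : ∀ᶠ n in (𝒰 : Filter ℕ), rncBranch g U' n (ball x r) (h n) := by
    filter_upwards [hev2] with n hn using (hh n hn).1
  refine ⟨h, hbr, rnc_shrink H 𝒰 h𝒰 hB hy hns hbr hy' (hz'.congr' ?_)⟩
  filter_upwards [hev2] with n hn using (hh n hn).2.symm

/-- A uniformly contracting branch has a repelling fixed point. -/
lemma rnc_fixed (H : PLSetting g U' U d) {n : ℕ} {z : ℂ} {ρ : ℝ} (hρ : 0 < ρ)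
    (hB : ball z (2 * ρ) ⊆ U \ postCrit g U') {h : ℂ → ℂ}
    (hh : rncBranch g U' n (ball z (2 * ρ)) h)
    (hcl : ∀ u ∈ ball z (2 * ρ), dist z (h u) ≤ ρ / 4) :
    ∃ a, rncDom g U' n a ∧ g^[n] a = a ∧ 1 < ‖deriv (g^[n]) a‖ ∧ dist a z < ρ := by
  have hd := hh.differentiableOn H isOpen_ball hB
  have hlip : ∀ u ∈ ball z ρ, ∀ v ∈ ball z ρ, ‖h u - h v‖ ≤ 1 / 4 * ‖u - v‖ := by
    intro u hu v hv
    have := rnc_lip (f := fun w => h w - z) (M := ρ / 4) hρ (hd.sub_const z) (fun w hw => by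
      rw [← dist_eq_norm, dist_comm]; exact hcl w hw) hu hv
    have h2 : ρ / 4 / ρ = 1 / 4 := by field_simp
    rw [h2] at this
    simpa using this
  have hs1 : closedBall z (ρ / 2) ⊆ ball z ρ := closedBall_subset_ball (by linarith)
  have hs2 : ball z ρ ⊆ ball z (2 * ρ) := ball_subset_ball (by linarith)
  have hmaps : MapsTo h (closedBall z (ρ / 2)) (closedBall z (ρ / 2)) := by
    intro u hu
    have := hcl u (hs2 (hs1 hu))
    rw [mem_closedBall, dist_comm]
    linarith
  have hcon : ContractingWith (1 / 4) (hmaps.restrict h _ _) := by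
    refine ⟨by rw [← NNReal.coe_lt_coe]; norm_num, LipschitzWith.of_dist_le_mul fun u v => ?_⟩
    have := hlip u (hs1 u.2) v (hs1 v.2)
    rw [← dist_eq_norm, ← dist_eq_norm] at this
    simpa [Subtype.dist_eq] using this
  obtain ⟨a, ha, hfix, -⟩ := hcon.exists_fixedPoint' isClosed_closedBall.isComplete hmaps
    (mem_closedBall_self (x := z) (by positivity)) (edist_ne_top _ _)
  have haB := hs2 (hs1 ha)
  obtain ⟨h1, h2⟩ := hh.2 a haB
  have hfa : h a = a := hfix
  have hder := hh.hasDerivAt H isOpen_ball hB haB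
  have hle : ‖(deriv (g^[n]) (h a))⁻¹‖ ≤ 1 / 4 := by
    refine hder.le_of_lip' (by norm_num) ?_
    filter_upwards [isOpen_ball.mem_nhds (hs1 ha)] with u hu using hlip u hu a (hs1 ha)
  have hne := rnc_deriv_ne H n h1 (by rw [h2]; exact (hB haB).2)
  rw [hfa] at h1 h2 hle hne
  refine ⟨a, h1, h2, ?_, hs1 ha⟩
  rw [norm_inv] at hle
  have hpos := norm_pos_iff.2 hne
  rw [inv_le_comm₀ hpos (by norm_num)] at hle
  norm_num at hle
  linarith

lemma rnc_main (H : PLSetting g U' U d) {V₀ : Set ℂ}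
    (hV₀ : IsTopDisk V₀) (hV₀bd : Bornology.IsBounded V₀)
    (hΓ₀ : IsJordanCurve (frontier V₀))
    (hPV₀ : postCrit g U' ⊆ V₀) (hV₀U : closure V₀ ⊆ U)
    (hA : ∀ n : ℕ, (frontier (preIter g U' V₀ n) ∩ frontier V₀).Nonempty) :
    ∀ ε > (0 : ℝ), ∃ n₀ : ℕ, ∀ n ≥ n₀, ∃ a : ℂ,
      (∀ k < n, g^[k] a ∈ U') ∧ g^[n] a = a ∧ 1 < ‖deriv (g^[n]) a‖ ∧
      ∃ b ∈ frontier V₀, dist a b < ε := by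
  intro ε hε
  by_contra hcontra
  set bad : Set ℕ := {n | ¬ ∃ a : ℂ,
      (∀ k < n, g^[k] a ∈ U') ∧ g^[n] a = a ∧ 1 < ‖deriv (g^[n]) a‖ ∧
      ∃ b ∈ frontier V₀, dist a b < ε} with hbad
  have hfreq : ∃ᶠ n in atTop, n ∈ bad := by
    rw [frequently_atTop]
    intro n₀
    by_contra h2
    refine hcontra ⟨n₀, fun n hn => ?_⟩
    by_contra h3
    exact h2 ⟨n, hn, h3⟩
  have hnb : (atTop ⊓ 𝓟 bad : Filter ℕ).NeBot := frequently_mem_iff_neBot.1 hfreq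
  set 𝒰 : Ultrafilter ℕ := Ultrafilter.of (atTop ⊓ 𝓟 bad) with h𝒰def
  have h𝒰0 : (𝒰 : Filter ℕ) ≤ atTop ⊓ 𝓟 bad := Ultrafilter.of_le _
  have h𝒰 : (𝒰 : Filter ℕ) ≤ atTop := h𝒰0.trans inf_le_left
  have h𝒰b : ∀ᶠ n in (𝒰 : Filter ℕ), n ∈ bad := le_principal_iff.1 (h𝒰0.trans inf_le_right)
  choose zs hzs using hA
  obtain ⟨hconn, hcpt⟩ := rnc_jordan hΓ₀
  have hfr := fun n => rnc_preIter_frontier H hV₀.1 hV₀bd hV₀U (hzs n).1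
  obtain ⟨z, hzΓ, hz⟩ := hcpt.ultrafilter_le_nhds (𝒰.map zs)
    (le_principal_iff.2 (Ultrafilter.mem_map.2 (univ_mem' fun n => (hzs n).2)))
  obtain ⟨w, hwΓ, hw⟩ := hcpt.ultrafilter_le_nhds (𝒰.map fun n => g^[n] (zs n))
    (le_principal_iff.2 (Ultrafilter.mem_map.2 (univ_mem' fun n => (hfr n).2)))
  have hΓO : frontier V₀ ⊆ U \ postCrit g U' := fun z hz =>
    ⟨hV₀U hz.1, fun hP => hz.2 (by rw [hV₀.1.interior_eq]; exact hPV₀ hP)⟩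
  set O' : Set ℂ := {y | ∃ x₀ ∈ frontier V₀, ∃ r, ball x₀ r ⊆ U \ postCrit g U' ∧ y ∈ ball x₀ r}
    with hO'
  have hO'o : IsOpen O' := by
    rw [isOpen_iff_mem_nhds]
    rintro y ⟨x₀, hx₀, r, hb, hy⟩
    filter_upwards [isOpen_ball.mem_nhds hy] with u hu using ⟨x₀, hx₀, r, hb, hu⟩
  have hO'O : O' ⊆ U \ postCrit g U' := by
    rintro y ⟨x₀, hx₀, r, hb, hy⟩
    exact hb hy
  have hΓO' : frontier V₀ ⊆ O' := by
    intro x hx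
    obtain ⟨r, hr, hb⟩ := Metric.isOpen_iff.1 (rnc_Oopen H) x (hΓO hx)
    exact ⟨x, hx, r, hb, mem_ball_self hr⟩
  have hns : ∀ y ∈ O', ∀ m : ℕ → ℕ, (∀ j, 1 ≤ m j) →
      y ∉ rncS g U' (hyperfilter ℕ : Filter ℕ) m := by
    rintro y ⟨x₀, hx₀, r, hb, hy⟩ m hm
    exact rnc_no_id H hV₀ hV₀bd hΓ₀ hPV₀ hV₀U (hyperfilter ℕ) (Eventually.of_forall hm) hx₀ hb hy
  have hwT : w ∈ rncT g U' 𝒰 z := ⟨fun n => g^[n] (zs n), zs, hw, hz,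
    Eventually.of_forall fun n => ⟨(hfr n).1, rfl⟩⟩
  have hΓT : frontier V₀ ⊆ rncT g U' 𝒰 z := by
    refine rnc_spread hO'o ?_ hconn hΓO' ⟨w, hwΓ, hwT⟩
    rintro x r hr hb ⟨y, hyT, hyB⟩ u hu
    obtain ⟨h, hbr, hlim⟩ := rnc_T_conv H 𝒰 h𝒰 (hb.trans hO'O) hyB (hns y (hb hyB)) hyT
    refine ⟨fun _ => u, fun n => h n u, tendsto_const_nhds, ?_, ?_⟩
    · exact (rnc_cc isOpen_ball continuousOn_const hlim hu).comp
        (tendsto_id.prodMk tendsto_const_nhds)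
    · filter_upwards [hbr] with n hn using hn.2 u hu
  obtain ⟨r, hr, hb⟩ := Metric.isOpen_iff.1 (rnc_Oopen H) z (hΓO hzΓ)
  obtain ⟨h, hbr, hlim⟩ := rnc_T_conv H 𝒰 h𝒰 hb (mem_ball_self hr) (hns z (hΓO' hzΓ)) (hΓT hzΓ)
  set ρ : ℝ := min (r / 4) ε with hρdef
  have hρ : 0 < ρ := by positivity
  have hρr : ρ ≤ r / 4 := min_le_left _ _
  have hsub : closedBall z (2 * ρ) ⊆ ball z r := closedBall_subset_ball (by linarith)
  have hsub' : ball z (2 * ρ) ⊆ ball z r := ball_subset_closedBall.trans hsub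
  have hun := rnc_unif isOpen_ball hlim (isCompact_closedBall z (2 * ρ)) hsub
    (show 0 < ρ / 4 by positivity)
  obtain ⟨n, ⟨hnbr, hncl⟩, hnbad⟩ := ((hbr.and hun).and h𝒰b).exists
  obtain ⟨a, h1, h2, h3, h4⟩ := rnc_fixed H hρ (hsub'.trans hb)
    ⟨hnbr.1.mono hsub', fun u hu => hnbr.2 u (hsub' hu)⟩
    (fun u hu => (hncl u (ball_subset_closedBall hu)).le)
  exact hnbad ⟨a, h1, h2, h3, z, hzΓ, h4.trans_le (min_le_right _ _)⟩

end final

/-- **Proposition (case (A)).** Let `Γ₀ = ∂V₀` be a Jordan curve in `U` enclosing `P_g`,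
with Jordan domain `V₀` satisfying `P_g ⊆ V₀ ⊆ closure V₀ ⊆ U`. If `Γₙ ∩ Γ₀ ≠ ∅` for all
`n` (where `Γₙ = ∂(g^{-n}(V₀))`), then for every `ε > 0` and every sufficiently large `n`,
the map `gⁿ` has a repelling fixed point in the `ε`-neighborhood of `Γ₀`. -/
theorem repelling_near_curve {g : ℂ → ℂ} {U' U : Set ℂ} {d : ℕ}
    (H : PLSetting g U' U d) {V₀ : Set ℂ}
    (hV₀ : IsTopDisk V₀) (hV₀bd : Bornology.IsBounded V₀)
    (hΓ₀ : IsJordanCurve (frontier V₀))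
    (hPV₀ : postCrit g U' ⊆ V₀) (hV₀U : closure V₀ ⊆ U)
    (hA : ∀ n : ℕ, (frontier (preIter g U' V₀ n) ∩ frontier V₀).Nonempty) :
    ∀ ε > (0 : ℝ), ∃ n₀ : ℕ, ∀ n ≥ n₀, ∃ a : ℂ,
      (∀ k < n, g^[k] a ∈ U') ∧ g^[n] a = a ∧ 1 < ‖deriv (g^[n]) a‖ ∧
      ∃ b ∈ frontier V₀, dist a b < ε := by
  exact rnc_main H hV₀ hV₀bd hΓ₀ hPV₀ hV₀U hA
end
end
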